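/- Let 1 < q < ∞ and let w ∈ A_q(ℝⁿ) be a weight. A function f belongs to the weighted Sobolev space W^{1,q}(ℝⁿ, w) if and only if f ∈ L^q(ℝⁿ, w) and there exists a nonnegative function g ∈ L^q(ℝⁿ, w) such that the inequality |f(x) − f(y)| ≤ |x−y|(g(x) + g(y)) holds for almost every pair of points x, y ∈ ℝⁿ. -/

import Mathlib

/-!
Let `M` be the centred maximal function over balls of dyadic radius. Both directions rest on
averaging at dyadic scales.

**From a weak gradient to the pointwise inequality.** Mollify `f` at scale `2 ^ k` (`moll k f`). The
gradient of `moll k f` at a point is an average of `∇f` over a ball of radius `2 ^ k`, so on a ball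
of radius comparable to `2 ^ k` around `x` the function `moll k f` is Lipschitz with constant
`≲ M|∇f|(x)` (`moll_lipschitz`). Comparing `moll k f` and `moll (k + 1) f` at `x` through their
common mollification (`moll_comm`) and summing the geometric series gives
`|f x - moll k f x| ≲ 2 ^ k M|∇f|(x)` at every point where the mollifications converge
(`moll_limit`). Choosing `2 ^ k` comparable to `|x - y|` yields
`|f x - f y| ≲ |x - y| (M|∇f|(x) + M|∇f|(y))` (`sobolev_pointwise`); no Poincaré inequality is
needed. So `g = C M|∇f|` works, and `g ∈ L^q(w)` is Muckenhoupt's theorem (`muckenhoupt`).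

**Muckenhoupt's theorem.** With `σ = w ^ (-1 / (q - 1))`, the `A_q` condition gives Lerner's
pointwise bound of `(M f) ^ (q - 1)` by `M_w (M_σ (f / σ) ^ (q - 1) / w)`, where `M_μ` averages with
respect to the measure `μ` (`maxFn_pointwise`). The centred operator `M_μ` is bounded on `L^p(μ)`
for every `p > 1` with a bound independent of `μ` (`maxFn_strong`), by the Besicovitch covering
theorem and Marcinkiewicz interpolation; using this with `p = q / (q - 1)` for `M_w` and with
`p = q` for `M_σ` finishes the proof, without the self-improvement of `A_q` weights.

**From the pointwise inequality to a weak gradient.** By Hölder's inequality and `A_q`, both `f` and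
`g` are locally integrable. Integrating the pointwise inequality against translates of a test
function `φ` and differentiating in the translation gives `|∫ f ∂φ| ≤ 2 ∫ g |φ|` (`test_bound`).
A linear functional on test functions with such a bound is integration against a locally
integrable function `v` (`exists_density`): after dividing `g dx` by a suitable weight the
functional is bounded on an `L²` space, where the Riesz representation theorem applies. Testing
with mollifiers gives `|v| ≤ 2 g` almost everywhere, so the weak gradient lies in `L^q(w)`.
-/

open MeasureTheory Metric Set ENNReal

/-- The weighted Lebesgue norm `‖f‖_{L^p(Ω,v)} = (∫_Ω |f|^p v dx)^{1/p}`. -/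
noncomputable def wLqNorm {n : ℕ} (p : ℝ) (v : EuclideanSpace ℝ (Fin n) → ℝ)
    (Ω : Set (EuclideanSpace ℝ (Fin n))) (f : EuclideanSpace ℝ (Fin n) → ℝ) : ℝ≥0∞ :=
  (∫⁻ x in Ω, ENNReal.ofReal |f x| ^ p * ENNReal.ofReal (v x)) ^ (1 / p)

/-- The generalized grand Lebesgue norm
`‖f‖_{L^{q)}_a(Ω,w)} = sup_{0<ε<q−1} (ε ∫_Ω |f|^{q−ε} w a^ε dx)^{1/(q−ε)}`. -/
noncomputable def grandNorm {n : ℕ} (q : ℝ) (w a : EuclideanSpace ℝ (Fin n) → ℝ)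
    (Ω : Set (EuclideanSpace ℝ (Fin n))) (f : EuclideanSpace ℝ (Fin n) → ℝ) : ℝ≥0∞ :=
  ⨆ (ε : ℝ) (_ : ε ∈ Set.Ioo (0 : ℝ) (q - 1)),
    (ENNReal.ofReal ε *
      ∫⁻ x in Ω, ENNReal.ofReal |f x| ^ (q - ε) * ENNReal.ofReal (w x * a x ^ ε))
        ^ (1 / (q - ε))

/-- The axis-parallel cube with center `c` and half edge-length `r`. -/
def axisCube {n : ℕ} (c : EuclideanSpace ℝ (Fin n)) (r : ℝ) :
    Set (EuclideanSpace ℝ (Fin n)) :=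
  {x | ∀ i, |x i - c i| ≤ r}

/-- The Muckenhoupt class `A_q(ℝⁿ)`:
`sup_Q (fQ w) (fQ w^{−1/(q−1)})^{q−1} < ∞` over axis-parallel cubes `Q`. -/
def MemAq {n : ℕ} (q : ℝ) (w : EuclideanSpace ℝ (Fin n) → ℝ) : Prop :=
  ∃ C : ℝ≥0∞, C ≠ ⊤ ∧ ∀ (c : EuclideanSpace ℝ (Fin n)) (r : ℝ), 0 < r →
    ((volume (axisCube c r))⁻¹ * ∫⁻ x in axisCube c r, ENNReal.ofReal (w x)) *
      ((volume (axisCube c r))⁻¹ *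
        ∫⁻ x in axisCube c r, ENNReal.ofReal (w x ^ (-(1 / (q - 1))))) ^ (q - 1) ≤ C


/-- `gf : ℝⁿ → ℝⁿ` is a weak gradient of `f : ℝⁿ → ℝ`. -/
def IsWeakGrad {n : ℕ} (f : EuclideanSpace ℝ (Fin n) → ℝ)
    (gf : EuclideanSpace ℝ (Fin n) → EuclideanSpace ℝ (Fin n)) : Prop :=
  LocallyIntegrable f volume ∧ LocallyIntegrable gf volume ∧
    ∀ φ : EuclideanSpace ℝ (Fin n) → ℝ, ContDiff ℝ (⊤ : ℕ∞) φ → HasCompactSupport φ →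
      ∀ k : Fin n,
        ∫ x, f x * fderiv ℝ φ x (EuclideanSpace.single k 1)
          = - ∫ x, gf x k * φ x

/-! ### The dyadic maximal function and its weak and strong type bounds -/

/-- The centred maximal function of `f` with respect to `μ`, over closed balls of dyadic radius
`2 ^ k`, `k : ℤ`. Averages are
`ℝ≥0∞`-valued quotients, so a ball of `μ`-measure `0` or `⊤` contributes `0`. -/
noncomputable def maxFn {n : ℕ} (μ : Measure (EuclideanSpace ℝ (Fin n)))
    (f : EuclideanSpace ℝ (Fin n) → ℝ≥0∞) (x : EuclideanSpace ℝ (Fin n)) : ℝ≥0∞ :=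
  ⨆ k : ℤ, (∫⁻ y in closedBall x ((2 : ℝ) ^ k), f y ∂μ) / μ (closedBall x ((2 : ℝ) ^ k))

lemma measurable_lintegral_closedBall {n : ℕ} (μ : Measure (EuclideanSpace ℝ (Fin n))) [SFinite μ]
    {f : EuclideanSpace ℝ (Fin n) → ℝ≥0∞} (hf : Measurable f) (r : ℝ) :
    Measurable fun x => ∫⁻ y in closedBall x r, f y ∂μ := by
  have hS : MeasurableSet {p : EuclideanSpace ℝ (Fin n) × EuclideanSpace ℝ (Fin n) |
      dist p.2 p.1 ≤ r} :=
    (isClosed_le (by fun_prop) continuous_const).measurableSet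
  have := (Measurable.indicator (hf.comp measurable_snd) hS).lintegral_prod_right' (ν := μ)
  convert this using 2 with x
  rw [← lintegral_indicator measurableSet_closedBall]
  rfl

lemma measurable_maxFn {n : ℕ} (μ : Measure (EuclideanSpace ℝ (Fin n))) [SFinite μ]
    {f : EuclideanSpace ℝ (Fin n) → ℝ≥0∞} (hf : Measurable f) : Measurable (maxFn μ f) := by
  refine Measurable.iSup fun k => (measurable_lintegral_closedBall μ hf _).div ?_
  simpa using measurable_lintegral_closedBall μ (f := fun _ => 1) measurable_const ((2 : ℝ) ^ k)

/-- The weak type `(1, 1)` bound for an arbitrary measure. The constant is the Besicovitch covering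
number of `ℝⁿ`, hence independent of `μ`. The covering theorem requires bounded radii, so it is applied
to the points where a ball of radius at most `2 ^ K` witnesses the inequality, and `K` then tends to
infinity. -/
lemma maxFn_weak (n : ℕ) : ∃ N : ℕ, ∀ (μ : Measure (EuclideanSpace ℝ (Fin n)))
    (f : EuclideanSpace ℝ (Fin n) → ℝ≥0∞) (t : ℝ≥0∞),
    t * μ {x | t < maxFn μ f x} ≤ N * ∫⁻ x, f x ∂μ := by
  obtain ⟨N, τ, hτ, hN⟩ :=
    HasBesicovitchCovering.no_satelliteConfig (α := EuclideanSpace ℝ (Fin n))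
  refine ⟨N, fun μ f t => ?_⟩
  -- the points where a ball of radius at most `2 ^ K` witnesses the inequality
  set A : ℕ → Set (EuclideanSpace ℝ (Fin n)) := fun K => {x | ∃ k : ℤ, k ≤ K ∧
    t * μ (closedBall x ((2 : ℝ) ^ k)) < ∫⁻ y in closedBall x ((2 : ℝ) ^ k), f y ∂μ} with hA
  have hsub : {x | t < maxFn μ f x} ⊆ ⋃ K, A K := by
    intro x hx
    have hx' : t < maxFn μ f x := hx
    obtain ⟨k, hk⟩ := lt_iSup_iff.1 hx'
    exact mem_iUnion.2 ⟨k.toNat, k, Int.self_le_toNat k, ENNReal.mul_lt_of_lt_div hk⟩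
  have hmono : Monotone A := by
    intro K L hKL x ⟨k, hk, h⟩
    exact ⟨k, hk.trans (by exact_mod_cast hKL), h⟩
  have key : ∀ K, t * μ (A K) ≤ N * ∫⁻ x, f x ∂μ := by
    intro K
    choose k hk hlt using fun x : A K => x.2
    let q : Besicovitch.BallPackage (A K) (EuclideanSpace ℝ (Fin n)) :=
      { c := fun x => x
        r := fun x => (2 : ℝ) ^ (k x)
        rpos := fun x => by positivity
        r_bound := (2 : ℝ) ^ (K : ℤ)
        r_le := fun x => zpow_le_zpow_right₀ (by norm_num) (hk x) }
    obtain ⟨s, hs, hcov⟩ := Besicovitch.exist_disjoint_covering_families hτ hN q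
    have hcount : ∀ i, (s i).Countable := by
      intro i
      refine (hs i).countable_of_nonempty_interior fun x _ => ?_
      exact ⟨x, ball_subset_interior_closedBall (mem_ball_self (q.rpos x))⟩
    have hAsub : A K ⊆ ⋃ i : Fin N, ⋃ j ∈ s i, closedBall (q.c j) (q.r j) := by
      intro x hx
      have := hcov ⟨⟨x, hx⟩, rfl⟩
      simp only [mem_iUnion] at this ⊢
      obtain ⟨i, j, hj, h⟩ := this
      exact ⟨i, j, hj, ball_subset_closedBall h⟩
    calc t * μ (A K) ≤ t * ∑ i : Fin N, μ (⋃ j ∈ s i, closedBall (q.c j) (q.r j)) := by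
          gcongr
          exact (measure_mono hAsub).trans (measure_iUnion_fintype_le _ _)
      _ = ∑ i : Fin N, t * μ (⋃ j ∈ s i, closedBall (q.c j) (q.r j)) := Finset.mul_sum _ _ _
      _ ≤ ∑ i : Fin N, ∫⁻ x, f x ∂μ := by
          refine Finset.sum_le_sum fun i _ => ?_
          have hc : Countable (s i) := (hcount i).to_subtype
          calc t * μ (⋃ j ∈ s i, closedBall (q.c j) (q.r j))
              ≤ t * ∑' j : s i, μ (closedBall (q.c j) (q.r j)) := by
                gcongr
                exact measure_biUnion_le _ (hcount i) _
            _ = ∑' j : s i, t * μ (closedBall (q.c j) (q.r j)) := ENNReal.tsum_mul_left.symm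
            _ ≤ ∑' j : s i, ∫⁻ x in closedBall (q.c j) (q.r j), f x ∂μ :=
                ENNReal.tsum_le_tsum fun j => (hlt j).le
            _ = ∫⁻ x in ⋃ j ∈ s i, closedBall (q.c j) (q.r j), f x ∂μ :=
                (lintegral_biUnion (hcount i) (fun _ _ => measurableSet_closedBall) (hs i) _).symm
            _ ≤ ∫⁻ x, f x ∂μ := setLIntegral_le_lintegral _ _
      _ = N * ∫⁻ x, f x ∂μ := by simp
  calc t * μ {x | t < maxFn μ f x} ≤ t * μ (⋃ K, A K) := by gcongr
    _ = ⨆ K, t * μ (A K) := by rw [hmono.measure_iUnion, ENNReal.mul_iSup]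
    _ ≤ _ := iSup_le key

/-- The layer-cake kernel: `∫₀ᵃ t ^ (s - 1) dt = a ^ s / s`, including `a = ⊤`. It turns integrals of
powers into integrals of distribution functions by Tonelli's theorem. -/
lemma layer_kernel (s : ℝ) (hs : 0 < s) (a : ℝ≥0∞) :
    ∫⁻ t in Ioi (0 : ℝ), {t : ℝ | ENNReal.ofReal t < a}.indicator
      (fun t => ENNReal.ofReal (t ^ (s - 1))) t = a ^ s / ENNReal.ofReal s := by
  have hfin : ∀ b : ℝ, 0 ≤ b → ∫⁻ t in Ioo (0 : ℝ) b, ENNReal.ofReal (t ^ (s - 1)) =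
      ENNReal.ofReal b ^ s / ENNReal.ofReal s := by
    intro b hb
    have hint := intervalIntegral.intervalIntegrable_rpow' (a := 0) (b := b) (r := s - 1)
      (by linarith)
    rw [intervalIntegrable_iff_integrableOn_Ioo_of_le hb] at hint
    rw [← ofReal_integral_eq_lintegral_ofReal hint, ← integral_Ioc_eq_integral_Ioo,
      ← intervalIntegral.integral_of_le hb, integral_rpow (Or.inl (by linarith)),
      ENNReal.ofReal_rpow_of_nonneg hb hs.le, ← ENNReal.ofReal_div_of_pos hs]
    · simp [Real.zero_rpow hs.ne']
    · filter_upwards [ae_restrict_mem measurableSet_Ioo] with t ht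
      exact Real.rpow_nonneg ht.1.le _
  induction a with
  | top =>
    have : ∀ m : ℕ, ENNReal.ofReal m ^ s / ENNReal.ofReal s ≤
        ∫⁻ t in Ioi (0 : ℝ), {t : ℝ | ENNReal.ofReal t < ⊤}.indicator
      (fun t => ENNReal.ofReal (t ^ (s - 1))) t := by
      intro m
      rw [← hfin m (by positivity)]
      simp only [ENNReal.ofReal_lt_top, ofPred_true, indicator_univ]
      exact lintegral_mono_set Ioo_subset_Ioi_self
    have h2 : Filter.Tendsto (fun m : ℕ => ENNReal.ofReal m ^ s / ENNReal.ofReal s) Filter.atTop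
        (nhds (⊤ ^ s / ENNReal.ofReal s)) := by
      refine ENNReal.Tendsto.div_const ?_ (Or.inr ?_)
      · refine (ENNReal.continuous_rpow_const.tendsto _).comp ?_
        simpa using ENNReal.tendsto_nat_nhds_top
      · simpa using hs
    have h3 := le_of_tendsto' h2 this
    have h4 : (⊤ : ℝ≥0∞) ^ s / ENNReal.ofReal s = ⊤ := by
      rw [ENNReal.top_rpow_of_pos hs, ENNReal.top_div_of_ne_top ENNReal.ofReal_ne_top]
    rw [h4] at h3 ⊢
    exact top_le_iff.1 h3
  | coe a =>
    have hset : MeasurableSet {t : ℝ | ENNReal.ofReal t < (a : ℝ≥0∞)} :=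
      measurableSet_lt ENNReal.measurable_ofReal measurable_const
    rw [lintegral_indicator hset, Measure.restrict_restrict hset]
    have : {t : ℝ | ENNReal.ofReal t < (a : ℝ≥0∞)} ∩ Ioi 0 = Ioo 0 (a : ℝ) := by
      ext t
      simp only [mem_inter_iff, mem_ofPred_eq, mem_Ioi, mem_Ioo]
      constructor
      · rintro ⟨h, h0⟩
        exact ⟨h0, by rwa [← ENNReal.ofReal_coe_nnreal, ENNReal.ofReal_lt_ofReal_iff_of_nonneg h0.le] at h⟩
      · rintro ⟨h0, h⟩
        exact ⟨by rwa [← ENNReal.ofReal_coe_nnreal, ENNReal.ofReal_lt_ofReal_iff_of_nonneg h0.le], h0⟩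
    rw [this, hfin a a.2, ENNReal.ofReal_coe_nnreal]

lemma measurable_layer {α : Type*} [MeasurableSpace α] {F : α → ℝ≥0∞} (hF : Measurable F) (p : ℝ) :
    Measurable fun z : α × ℝ => {t : ℝ | ENNReal.ofReal t < F z.1}.indicator
      (fun t => ENNReal.ofReal (t ^ p)) z.2 := by
  have hS : MeasurableSet {z : α × ℝ | ENNReal.ofReal z.2 < F z.1} :=
    measurableSet_lt (by fun_prop) (by fun_prop)
  have : Measurable fun z : α × ℝ => ENNReal.ofReal (z.2 ^ p) := by fun_prop
  exact this.indicator hS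

/-- The strong type `(p, p)` bound, by Marcinkiewicz interpolation between `maxFn_weak` and the
trivial `L^∞` bound: at height `t`, only the part of `f` above `t / 2` matters. The constant does
not depend on `μ`. -/
lemma maxFn_strong (n : ℕ) (p : ℝ) (hp : 1 < p) : ∃ C : ℝ≥0∞, C ≠ ⊤ ∧
    ∀ (μ : Measure (EuclideanSpace ℝ (Fin n))) [SFinite μ]
      (f : EuclideanSpace ℝ (Fin n) → ℝ≥0∞), Measurable f →
      ∫⁻ x, maxFn μ f x ^ p ∂μ ≤ C * ∫⁻ x, f x ^ p ∂μ := by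
  obtain ⟨N, hN⟩ := maxFn_weak n
  refine ⟨ENNReal.ofReal p * (2 * N) * (2 ^ (p - 1) / ENNReal.ofReal (p - 1)), ?_, ?_⟩
  · refine ENNReal.mul_ne_top (ENNReal.mul_ne_top ENNReal.ofReal_ne_top ?_) ?_
    · exact ENNReal.mul_ne_top (by simp) (by simp)
    · exact (ENNReal.div_lt_top (ENNReal.rpow_ne_top_of_nonneg (by linarith) (by simp))
        (by simpa using hp)).ne
  intro μ _ f hf
  have hM := measurable_maxFn μ hf
  have h2f : Measurable fun x => 2 * f x := by fun_prop
  have hp0 : ENNReal.ofReal p ≠ 0 := by simp; linarith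
  -- Tonelli against the kernel `layer_kernel`
  have swap : ∀ (ν : Measure (EuclideanSpace ℝ (Fin n))) [SFinite ν]
      (F : EuclideanSpace ℝ (Fin n) → ℝ≥0∞) (s : ℝ), Measurable F → 0 < s →
      ∫⁻ x, F x ^ s / ENNReal.ofReal s ∂ν =
      ∫⁻ t in Ioi (0 : ℝ), ENNReal.ofReal (t ^ (s - 1)) * ν {x | ENNReal.ofReal t < F x} := by
    intro ν _ F s hF hs
    simp_rw [← layer_kernel s hs]
    rw [lintegral_lintegral_swap (measurable_layer hF (s - 1)).aemeasurable]
    refine lintegral_congr fun t => ?_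
    rw [← setLIntegral_const, ← lintegral_indicator (measurableSet_lt measurable_const hF)]
    rfl
  have htrunc : ∀ t : ℝ, 0 < t → ENNReal.ofReal t * μ {x | ENNReal.ofReal t < maxFn μ f x} ≤
      2 * N * ∫⁻ x in {x | ENNReal.ofReal t < 2 * f x}, f x ∂μ := by
    intro t ht
    set u : ℝ≥0∞ := ENNReal.ofReal (t / 2) with hu
    have hut : ENNReal.ofReal t = 2 * u := by
      rw [hu, ← ENNReal.ofReal_ofNat, ← ENNReal.ofReal_mul (by norm_num)]; congr 1; ring
    have hS : MeasurableSet {x | ENNReal.ofReal t < 2 * f x} :=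
      measurableSet_lt measurable_const h2f
    set f1 := {x | ENNReal.ofReal t < 2 * f x}.indicator f with hf1
    have hle : ∀ x, f x ≤ f1 x + u := by
      intro x
      by_cases hx : ENNReal.ofReal t < 2 * f x
      · simp [hf1, hx]
      · rw [not_lt, hut] at hx
        have := (ENNReal.mul_le_mul_iff_right (by norm_num) (by norm_num)).1 hx
        exact this.trans le_add_self
    have hMle : ∀ x, maxFn μ f x ≤ maxFn μ f1 x + u := by
      intro x
      refine iSup_le fun k => ?_
      calc (∫⁻ y in closedBall x ((2 : ℝ) ^ k), f y ∂μ) / μ (closedBall x ((2 : ℝ) ^ k))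
          ≤ (∫⁻ y in closedBall x ((2 : ℝ) ^ k), (f1 y + u) ∂μ)
              / μ (closedBall x ((2 : ℝ) ^ k)) := by
            gcongr with y; exact hle y
        _ = (∫⁻ y in closedBall x ((2 : ℝ) ^ k), f1 y ∂μ) / μ (closedBall x ((2 : ℝ) ^ k))
            + u * μ (closedBall x ((2 : ℝ) ^ k)) / μ (closedBall x ((2 : ℝ) ^ k)) := by
            rw [lintegral_add_right _ measurable_const, setLIntegral_const, ENNReal.add_div]
        _ ≤ maxFn μ f1 x + u := by
            gcongr
            · exact le_iSup (fun k : ℤ => (∫⁻ y in closedBall x ((2 : ℝ) ^ k), f1 y ∂μ) /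
                μ (closedBall x ((2 : ℝ) ^ k))) k
            · rw [mul_div_assoc]
              exact mul_le_of_le_one_right' ENNReal.div_self_le_one
    have hsub : {x | ENNReal.ofReal t < maxFn μ f x} ⊆ {x | u < maxFn μ f1 x} := by
      intro x hx
      have h1 : 2 * u < maxFn μ f1 x + u := hut ▸ lt_of_lt_of_le hx (hMle x)
      rw [two_mul] at h1
      exact lt_of_add_lt_add_right h1
    calc ENNReal.ofReal t * μ {x | ENNReal.ofReal t < maxFn μ f x}
        ≤ 2 * u * μ {x | u < maxFn μ f1 x} := by
          rw [← hut]
          exact mul_le_mul_right (measure_mono hsub) _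
      _ = 2 * (u * μ {x | u < maxFn μ f1 x}) := mul_assoc _ _ _
      _ ≤ 2 * (N * ∫⁻ x, f1 x ∂μ) := mul_le_mul_right (hN μ f1 u) _
      _ = _ := by rw [hf1, lintegral_indicator hS, mul_assoc]
  have hpow : ∀ t : ℝ, 0 < t → ENNReal.ofReal (t ^ (p - 1)) =
      ENNReal.ofReal (t ^ (p - 1 - 1)) * ENNReal.ofReal t := by
    intro t ht
    rw [← ENNReal.ofReal_mul (by positivity), ← Real.rpow_add_one ht.ne']; congr 2; ring
  calc ∫⁻ x, maxFn μ f x ^ p ∂μ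
      = ENNReal.ofReal p * ∫⁻ x, maxFn μ f x ^ p / ENNReal.ofReal p ∂μ := by
        rw [← lintegral_const_mul _ (by fun_prop)]
        refine lintegral_congr fun x => ?_
        rw [ENNReal.mul_div_cancel hp0 ENNReal.ofReal_ne_top]
    _ = ENNReal.ofReal p * ∫⁻ t in Ioi (0 : ℝ), ENNReal.ofReal (t ^ (p - 1)) *
          μ {x | ENNReal.ofReal t < maxFn μ f x} := by rw [swap μ _ p hM (by linarith)]
    _ ≤ ENNReal.ofReal p * ∫⁻ t in Ioi (0 : ℝ), 2 * N * (ENNReal.ofReal (t ^ (p - 1 - 1)) *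
          (μ.withDensity f) {x | ENNReal.ofReal t < 2 * f x}) := by
        refine mul_le_mul_right ?_ _
        refine setLIntegral_mono' measurableSet_Ioi fun t ht => ?_
        rw [hpow t ht, withDensity_apply _ (measurableSet_lt measurable_const h2f), mul_assoc,
          mul_left_comm (2 * (N : ℝ≥0∞))]
        exact mul_le_mul_right (htrunc t ht) _
    _ = ENNReal.ofReal p * (2 * N) * ∫⁻ x, (2 * f x) ^ (p - 1) / ENNReal.ofReal (p - 1)
          ∂(μ.withDensity f) := by
        rw [swap _ _ (p - 1) h2f (by linarith), lintegral_const_mul' _ _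
          (ENNReal.mul_ne_top (by simp) (by simp)), mul_assoc (ENNReal.ofReal p)]
    _ = ENNReal.ofReal p * (2 * N) * ((2 ^ (p - 1) / ENNReal.ofReal (p - 1)) *
          ∫⁻ x, f x ^ p ∂μ) := by
        congr 1
        rw [lintegral_withDensity_eq_lintegral_mul _ hf (by fun_prop),
          ← lintegral_const_mul _ (by fun_prop)]
        refine lintegral_congr fun x => ?_
        simp only [Pi.mul_apply]
        rw [ENNReal.mul_rpow_of_nonneg _ _ (by linarith : 0 ≤ p - 1)]
        have : f x ^ p = f x * f x ^ (p - 1) := by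
          rcases eq_or_ne (f x) 0 with h0 | h0
          · simp [h0, show 0 < p by linarith]
          rcases eq_or_ne (f x) ⊤ with h1 | h1
          · simp [h1, show 0 < p by linarith, hp]
          · conv_rhs => rw [← ENNReal.rpow_one (f x), ← ENNReal.rpow_mul, ← ENNReal.rpow_add _ _ h0 h1]
            congr 1; ring
        rw [this, div_eq_mul_inv, div_eq_mul_inv]
        ring
    _ = _ := by simp only [mul_assoc]

/-! ### Muckenhoupt's theorem -/

/-- The `A_q` condition over closed balls for an `ℝ≥0∞`-valued weight, with the averages replaced by
integrals and the normalising factor `|B| ^ q` moved to the right-hand side. -/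
def BallAq {n : ℕ} (q : ℝ) (W : EuclideanSpace ℝ (Fin n) → ℝ≥0∞) : Prop :=
  ∃ C : ℝ≥0∞, C ≠ ⊤ ∧ ∀ (c : EuclideanSpace ℝ (Fin n)) (r : ℝ), 0 < r →
    (∫⁻ x in closedBall c r, W x) *
      (∫⁻ x in closedBall c r, W x ^ (-(1 / (q - 1)))) ^ (q - 1) ≤
      C * volume (closedBall c r) ^ q

lemma volume_closedBall_mul {n : ℕ} (c c' : EuclideanSpace ℝ (Fin n)) {a r : ℝ} (ha : 0 ≤ a)
    (hr : 0 ≤ r) :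
    volume (closedBall c (a * r)) = ENNReal.ofReal (a ^ n) * volume (closedBall c' r) := by
  rw [Measure.addHaar_closedBall _ _ (by positivity), Measure.addHaar_closedBall _ _ hr, mul_pow,
    ENNReal.ofReal_mul (by positivity), mul_assoc]
  simp

lemma closedBall_subset_axisCube {n : ℕ} (c : EuclideanSpace ℝ (Fin n)) (r : ℝ) :
    closedBall c r ⊆ axisCube c r := by
  intro x hx i
  have h1 : ‖(x - c) i‖ ≤ ‖x - c‖ := PiLp.norm_apply_le _ i
  rw [mem_closedBall, dist_eq_norm] at hx
  simpa using h1.trans hx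

lemma axisCube_subset_closedBall {n : ℕ} (c : EuclideanSpace ℝ (Fin n)) {r : ℝ} (hr : 0 ≤ r) :
    axisCube c r ⊆ closedBall c ((n + 1) * r) := by
  intro x hx
  rw [mem_closedBall, dist_eq_norm, EuclideanSpace.norm_eq]
  refine Real.sqrt_le_iff.2 ⟨by positivity, ?_⟩
  calc ∑ i, ‖(x - c) i‖ ^ 2 ≤ ∑ i : Fin n, r ^ 2 := by
        refine Finset.sum_le_sum fun i _ => ?_
        have := hx i
        gcongr
        simpa using this
    _ = n * r ^ 2 := by simp
    _ ≤ ((n + 1) * r) ^ 2 := by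
        rw [mul_pow]
        gcongr
        nlinarith [(Nat.cast_nonneg n : (0 : ℝ) ≤ n)]

lemma volume_axisCube_le {n : ℕ} (c : EuclideanSpace ℝ (Fin n)) {r : ℝ} (hr : 0 ≤ r) :
    volume (axisCube c r) ≤ ENNReal.ofReal (((n : ℝ) + 1) ^ n) * volume (closedBall c r) :=
  (measure_mono (axisCube_subset_closedBall c hr)).trans
    (volume_closedBall_mul c c (by positivity) hr).le

/-- A ball is contained in the cube of the same centre and half edge-length, whose volume is at most
`(n + 1) ^ n` times that of the ball, so the `A_q` condition passes from cubes to balls. -/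
lemma MemAq.ballAq {n : ℕ} {q : ℝ} (hq : 1 < q) {w : EuclideanSpace ℝ (Fin n) → ℝ}
    (hw_pos : ∀ᵐ x ∂volume, 0 < w x) (hw : MemAq q w) :
    BallAq q fun x => ENNReal.ofReal (w x) := by
  obtain ⟨C, hC, h⟩ := hw
  set K := ENNReal.ofReal (((n : ℝ) + 1) ^ n)
  refine ⟨C * K ^ q, ENNReal.mul_ne_top hC
    (ENNReal.rpow_ne_top_of_nonneg (by linarith) ENNReal.ofReal_ne_top), fun c r hr => ?_⟩
  set V := volume (axisCube c r) with hV
  have hVle : V ≤ K * volume (closedBall c r) := volume_axisCube_le c hr.le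
  have hV0 : V ≠ 0 := ((measure_closedBall_pos volume c hr).trans_le
    (measure_mono (closedBall_subset_axisCube c r))).ne'
  have hVt : V ≠ ⊤ := (hVle.trans_lt
    (ENNReal.mul_lt_top ENNReal.ofReal_lt_top measure_closedBall_lt_top)).ne
  have hσ : ∀ᵐ x ∂volume.restrict (closedBall c r),
      ENNReal.ofReal (w x) ^ (-(1 / (q - 1))) = ENNReal.ofReal (w x ^ (-(1 / (q - 1)))) := by
    filter_upwards [ae_restrict_of_ae hw_pos] with x hx
    exact ENNReal.ofReal_rpow_of_pos hx
  rw [lintegral_congr_ae hσ]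
  have h1 := h c r hr
  rw [← hV] at h1
  set A := ∫⁻ x in axisCube c r, ENNReal.ofReal (w x)
  set B := ∫⁻ x in axisCube c r, ENNReal.ofReal (w x ^ (-(1 / (q - 1))))
  calc (∫⁻ x in closedBall c r, ENNReal.ofReal (w x)) *
      (∫⁻ x in closedBall c r, ENNReal.ofReal (w x ^ (-(1 / (q - 1))))) ^ (q - 1)
      ≤ A * B ^ (q - 1) := by
        gcongr
        · exact lintegral_mono_set (closedBall_subset_axisCube c r)
        · exact lintegral_mono_set (closedBall_subset_axisCube c r)
    _ = V ^ q * (V⁻¹ * A * (V⁻¹ * B) ^ (q - 1)) := by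
        rw [ENNReal.mul_rpow_of_nonneg _ _ (by linarith : 0 ≤ q - 1)]
        have e1 : V ^ q = V * V ^ (q - 1) := by
          conv_rhs => rw [← ENNReal.rpow_one V, ← ENNReal.rpow_mul, ← ENNReal.rpow_add _ _ hV0 hVt]
          congr 1; ring
        rw [e1, ENNReal.inv_rpow]
        have hp0 : V ^ (q - 1) ≠ 0 := (ENNReal.rpow_pos (pos_iff_ne_zero.2 hV0) hVt).ne'
        have hpt : V ^ (q - 1) ≠ ⊤ := ENNReal.rpow_ne_top_of_nonneg (by linarith) hVt
        calc A * B ^ (q - 1) = (V * V⁻¹) * (V ^ (q - 1) * (V ^ (q - 1))⁻¹) * (A * B ^ (q - 1)) := by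
              rw [ENNReal.mul_inv_cancel hV0 hVt, ENNReal.mul_inv_cancel hp0 hpt]; simp
          _ = _ := by ring
    _ ≤ V ^ q * C := by gcongr
    _ ≤ (K * volume (closedBall c r)) ^ q * C := by gcongr
    _ = _ := by rw [ENNReal.mul_rpow_of_nonneg _ _ (by linarith : 0 ≤ q)]; ring

section
variable {n : ℕ} {q : ℝ} {W : EuclideanSpace ℝ (Fin n) → ℝ≥0∞}

lemma setLIntegral_pos_of_ae {α : Type*} [MeasurableSpace α] {μ : Measure α} {s : Set α}
    {F : α → ℝ≥0∞} (hF : Measurable F) (hpos : ∀ᵐ x ∂μ, F x ≠ 0) (hs : μ s ≠ 0) :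
    ∫⁻ x in s, F x ∂μ ≠ 0 := by
  intro h
  rw [lintegral_eq_zero_iff hF] at h
  have h2 : ∀ᵐ x ∂μ.restrict s, False := by
    filter_upwards [h, ae_restrict_of_ae hpos] with x h1 h2 using h2 h1
  rw [ae_iff] at h2
  simp at h2
  exact hs h2

/-- For an `A_q` weight, `W` and the dual weight `W ^ (-1 / (q - 1))` have positive finite mass on
every ball. -/
lemma BallAq.facts (hq : 1 < q) (hWm : Measurable W) (hW0 : ∀ᵐ x ∂volume, W x ≠ 0)
    (hWt : ∀ᵐ x ∂volume, W x ≠ ⊤) (hA : BallAq q W) (c : EuclideanSpace ℝ (Fin n)) {r : ℝ}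
    (hr : 0 < r) :
    (∫⁻ x in closedBall c r, W x ≠ 0 ∧ ∫⁻ x in closedBall c r, W x ≠ ⊤) ∧
    (∫⁻ x in closedBall c r, W x ^ (-(1 / (q - 1))) ≠ 0 ∧
      ∫⁻ x in closedBall c r, W x ^ (-(1 / (q - 1))) ≠ ⊤) := by
  have hB0 : volume (closedBall c r) ≠ 0 := (measure_closedBall_pos volume c hr).ne'
  have hBt : volume (closedBall c r) ≠ ⊤ := measure_closedBall_lt_top.ne
  have h1 : ∫⁻ x in closedBall c r, W x ≠ 0 := setLIntegral_pos_of_ae hWm hW0 hB0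
  have h2 : ∫⁻ x in closedBall c r, W x ^ (-(1 / (q - 1))) ≠ 0 := by
    refine setLIntegral_pos_of_ae (by fun_prop) ?_ hB0
    filter_upwards [hW0, hWt] with x h0 ht
    exact (ENNReal.rpow_pos (pos_iff_ne_zero.2 h0) ht).ne'
  obtain ⟨C, hC, h⟩ := hA
  have h3 := h c r hr
  have h4 : C * volume (closedBall c r) ^ q ≠ ⊤ :=
    ENNReal.mul_ne_top hC (ENNReal.rpow_ne_top_of_nonneg (by linarith) hBt)
  have h5 := (h3.trans_lt (lt_top_iff_ne_top.2 h4)).ne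
  have hq1 : 0 < q - 1 := by linarith
  refine ⟨⟨h1, fun ht => h5 ?_⟩, ⟨h2, fun ht => h5 ?_⟩⟩
  · rw [ht, ENNReal.top_mul]
    exact fun h0 => h2 ((ENNReal.rpow_eq_zero_iff_of_pos hq1).1 h0)
  · rw [ht, ENNReal.top_rpow_of_pos hq1, ENNReal.mul_top h1]

/-- Lerner's pointwise estimate: the unweighted maximal function is controlled by the composition of
the maximal functions for the measures `W ^ (-1 / (q - 1)) dx` and `W dx`. -/
lemma maxFn_pointwise (hq : 1 < q) (hWm : Measurable W) (hW0 : ∀ᵐ x ∂volume, W x ≠ 0)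
    (hWt : ∀ᵐ x ∂volume, W x ≠ ⊤) (hA : BallAq q W) :
    ∃ C : ℝ≥0∞, C ≠ ⊤ ∧ ∀ f : EuclideanSpace ℝ (Fin n) → ℝ≥0∞, Measurable f → ∀ x,
      maxFn volume f x ≤ (C * maxFn (volume.withDensity W)
        (fun y => maxFn (volume.withDensity fun z => W z ^ (-(1 / (q - 1))))
          (fun z => f z * (W z ^ (-(1 / (q - 1))))⁻¹) y ^ (q - 1) * (W y)⁻¹) x) ^ (1 / (q - 1)) := by
  have hfacts := fun c {r : ℝ} (hr : 0 < r) => hA.facts hq hWm hW0 hWt c hr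
  obtain ⟨C, hC, hA⟩ := hA
  have hq1 : 0 < q - 1 := by linarith
  set D : ℝ≥0∞ := ENNReal.ofReal (4 ^ n) with hD
  refine ⟨C * D ^ q, ENNReal.mul_ne_top hC
    (ENNReal.rpow_ne_top_of_nonneg (by linarith) ENNReal.ofReal_ne_top), fun f hf x => ?_⟩
  set S : EuclideanSpace ℝ (Fin n) → ℝ≥0∞ := fun z => W z ^ (-(1 / (q - 1))) with hS
  have hSm : Measurable S := by fun_prop
  have hS0 : ∀ᵐ x ∂volume, S x ≠ 0 := by
    filter_upwards [hW0, hWt] with x h0 ht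
    exact (ENNReal.rpow_pos (pos_iff_ne_zero.2 h0) ht).ne'
  have hSt : ∀ᵐ x ∂volume, S x ≠ ⊤ := by
    filter_upwards [hW0, hWt] with x h0 ht
    exact ENNReal.rpow_ne_top_of_ne_zero h0 ht
  set F := maxFn (volume.withDensity S) (fun z => f z * (S z)⁻¹) with hF
  have hFm : Measurable F := measurable_maxFn _ (by fun_prop)
  refine iSup_le fun k => ?_
  have hr : (0 : ℝ) < 2 ^ k := by positivity
  set r : ℝ := 2 ^ k with hrdef
  set I := ∫⁻ y in closedBall x r, f y with hI
  set b := volume (closedBall x r) with hb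
  have hb0 : b ≠ 0 := (measure_closedBall_pos volume x hr).ne'
  have hbt : b ≠ ⊤ := measure_closedBall_lt_top.ne
  set s := ∫⁻ z in closedBall x (4 * r), S z with hs
  obtain ⟨-, hs0, hst⟩ := hfacts x (r := 4 * r) (by positivity)
  obtain ⟨⟨hv0, hvt⟩, -⟩ := hfacts x hr
  set v := ∫⁻ z in closedBall x r, W z with hv
  have hAq : v * s ^ (q - 1) ≤ C * D ^ q * b ^ q := by
    calc v * s ^ (q - 1) ≤ (∫⁻ z in closedBall x (4 * r), W z) * s ^ (q - 1) := by
          gcongr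
          exact lintegral_mono_set (closedBall_subset_closedBall (by linarith))
      _ ≤ C * volume (closedBall x (4 * r)) ^ q := hA x _ (by positivity)
      _ = _ := by
          rw [volume_closedBall_mul x x (by norm_num) hr.le,
            ENNReal.mul_rpow_of_nonneg _ _ (by linarith : 0 ≤ q), mul_assoc]
  -- on the ball, the inner maximal function is at least the average over a ball twice as large
  have hFlow : ∀ y ∈ closedBall x r, I / s ≤ F y := by
    intro y hy
    rw [mem_closedBall] at hy
    refine le_trans ?_ (le_iSup _ (k + 1))
    have h2 : (2 : ℝ) ^ (k + 1) = 2 * r := by rw [zpow_add₀ (by norm_num)]; simp [hrdef, mul_comm]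
    rw [h2]
    have hsub1 : closedBall x r ⊆ closedBall y (2 * r) :=
      closedBall_subset_closedBall' (by rw [dist_comm]; linarith)
    have hsub2 : closedBall y (2 * r) ⊆ closedBall x (4 * r) :=
      closedBall_subset_closedBall' (by linarith)
    refine ENNReal.div_le_div ?_ ?_
    · rw [setLIntegral_withDensity_eq_setLIntegral_mul _ hSm (by fun_prop)
        measurableSet_closedBall]
      refine (lintegral_mono_set hsub1).trans (lintegral_mono_ae ?_)
      filter_upwards [ae_restrict_of_ae hS0, ae_restrict_of_ae hSt] with z h0 ht
      rw [Pi.mul_apply, mul_left_comm, ENNReal.mul_inv_cancel h0 ht, mul_one]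
    · rw [withDensity_apply _ measurableSet_closedBall]
      exact lintegral_mono_set hsub2
  set G := maxFn (volume.withDensity W) (fun y => F y ^ (q - 1) * (W y)⁻¹) x with hG
  have hGlow : b * (I / s) ^ (q - 1) / v ≤ G := by
    refine le_trans ?_ (le_iSup _ k)
    rw [withDensity_apply _ measurableSet_closedBall]
    refine ENNReal.div_le_div ?_ le_rfl
    rw [setLIntegral_withDensity_eq_setLIntegral_mul _ hWm (by fun_prop)
        measurableSet_closedBall]
    calc b * (I / s) ^ (q - 1) = ∫⁻ y in closedBall x r, (I / s) ^ (q - 1) := by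
          rw [setLIntegral_const, mul_comm]
      _ ≤ ∫⁻ y in closedBall x r, F y ^ (q - 1) := by
          refine setLIntegral_mono' measurableSet_closedBall fun y hy => ?_
          exact ENNReal.rpow_le_rpow (hFlow y hy) hq1.le
      _ ≤ _ := by
          refine lintegral_mono_ae ?_
          filter_upwards [ae_restrict_of_ae hW0, ae_restrict_of_ae hWt] with z h0 ht
          rw [Pi.mul_apply, mul_left_comm, ENNReal.mul_inv_cancel h0 ht, mul_one]
  rw [show I / b = ((I / b) ^ (q - 1)) ^ (1 / (q - 1)) by
    rw [← ENNReal.rpow_mul, mul_one_div_cancel hq1.ne', ENNReal.rpow_one]]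
  refine ENNReal.rpow_le_rpow ?_ (by positivity)
  refine le_trans ?_ (mul_le_mul_right hGlow _)
  have hbq : b ^ q = b * b ^ (q - 1) := by
    conv_rhs => rw [← ENNReal.rpow_one b, ← ENNReal.rpow_mul, ← ENNReal.rpow_add _ _ hb0 hbt]
    congr 1; ring
  have hbq0 : b ^ (q - 1) ≠ 0 := (ENNReal.rpow_pos (pos_iff_ne_zero.2 hb0) hbt).ne'
  have hbqt : b ^ (q - 1) ≠ ⊤ := ENNReal.rpow_ne_top_of_nonneg hq1.le hbt
  have hsq0 : s ^ (q - 1) ≠ 0 := (ENNReal.rpow_pos (pos_iff_ne_zero.2 hs0) hst).ne'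
  have hsqt : s ^ (q - 1) ≠ ⊤ := ENNReal.rpow_ne_top_of_nonneg hq1.le hst
  rw [ENNReal.div_rpow_of_nonneg _ _ hq1.le, ENNReal.div_rpow_of_nonneg _ _ hq1.le]
  set J := I ^ (q - 1)
  rw [hbq] at hAq
  rw [ENNReal.div_le_iff hbq0 hbqt]
  calc J = J * ((v * v⁻¹) * (s ^ (q - 1) * (s ^ (q - 1))⁻¹)) := by
        rw [ENNReal.mul_inv_cancel hv0 hvt, ENNReal.mul_inv_cancel hsq0 hsqt]; simp
    _ = (v * s ^ (q - 1)) * (J * v⁻¹ * (s ^ (q - 1))⁻¹) := by ring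
    _ ≤ (C * D ^ q * (b * b ^ (q - 1))) * (J * v⁻¹ * (s ^ (q - 1))⁻¹) := by gcongr
    _ = _ := by rw [div_eq_mul_inv, div_eq_mul_inv]; ring

/-- The maximal function is bounded on `L^q(W)` for `W ∈ A_q`. -/
theorem muckenhoupt (hq : 1 < q) (hWm : Measurable W) (hW0 : ∀ᵐ x ∂volume, W x ≠ 0)
    (hWt : ∀ᵐ x ∂volume, W x ≠ ⊤) (hA : BallAq q W) :
    ∃ C : ℝ≥0∞, C ≠ ⊤ ∧ ∀ f : EuclideanSpace ℝ (Fin n) → ℝ≥0∞, Measurable f →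
      ∫⁻ x, maxFn volume f x ^ q * W x ≤ C * ∫⁻ x, f x ^ q * W x := by
  have hq1 : 0 < q - 1 := by linarith
  have hq' : 1 < q / (q - 1) := by rw [lt_div_iff₀ hq1]; linarith
  obtain ⟨C0, hC0, hpt⟩ := maxFn_pointwise hq hWm hW0 hWt hA
  obtain ⟨C1, hC1, h1⟩ := maxFn_strong n (q / (q - 1)) hq'
  obtain ⟨C2, hC2, h2⟩ := maxFn_strong n q hq
  refine ⟨C0 ^ (q / (q - 1)) * C1 * C2, ENNReal.mul_ne_top (ENNReal.mul_ne_top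
    (ENNReal.rpow_ne_top_of_nonneg (by positivity) hC0) hC1) hC2, fun f hf => ?_⟩
  specialize hpt f hf
  set S : EuclideanSpace ℝ (Fin n) → ℝ≥0∞ := fun z => W z ^ (-(1 / (q - 1))) with hS
  have hSm : Measurable S := by fun_prop
  set F := maxFn (volume.withDensity S) (fun z => f z * (S z)⁻¹) with hF
  have hFm : Measurable F := measurable_maxFn _ (by fun_prop)
  set g := fun y => F y ^ (q - 1) * (W y)⁻¹ with hg
  have hgm : Measurable g := by fun_prop
  have hMm : Measurable (maxFn (volume.withDensity W) g) := measurable_maxFn _ hgm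
  have hMv : Measurable (maxFn volume f) := measurable_maxFn _ hf
  calc ∫⁻ x, maxFn volume f x ^ q * W x
      ≤ ∫⁻ x, C0 ^ (q / (q - 1)) * (W x * maxFn (volume.withDensity W) g x ^ (q / (q - 1))) := by
        refine lintegral_mono fun x => ?_
        have := ENNReal.rpow_le_rpow (hpt x) (by linarith : 0 ≤ q)
        rw [← ENNReal.rpow_mul, one_div_mul_eq_div,
          ENNReal.mul_rpow_of_nonneg _ _ (by positivity)] at this
        calc maxFn volume f x ^ q * W x ≤ _ * W x := mul_le_mul_left this _
          _ = _ := by ring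
    _ = C0 ^ (q / (q - 1)) * ∫⁻ x, maxFn (volume.withDensity W) g x ^ (q / (q - 1))
          ∂(volume.withDensity W) := by
        rw [lintegral_const_mul _ (by fun_prop), lintegral_withDensity_eq_lintegral_mul _ hWm
          (by fun_prop)]
        rfl
    _ ≤ C0 ^ (q / (q - 1)) * (C1 * ∫⁻ x, g x ^ (q / (q - 1)) ∂(volume.withDensity W)) :=
        mul_le_mul_right (h1 _ g hgm) _
    _ = C0 ^ (q / (q - 1)) * (C1 * ∫⁻ x, F x ^ q ∂(volume.withDensity S)) := by
        congr 2
        rw [lintegral_withDensity_eq_lintegral_mul _ hWm (by fun_prop),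
          lintegral_withDensity_eq_lintegral_mul _ hSm (by fun_prop)]
        refine lintegral_congr_ae ?_
        filter_upwards [hW0, hWt] with x h0 ht
        simp only [Pi.mul_apply, hg, hS]
        rw [ENNReal.mul_rpow_of_nonneg _ _ (by positivity), ← ENNReal.rpow_mul,
          mul_div_cancel₀ _ hq1.ne', mul_left_comm, mul_comm (W x ^ _), ENNReal.inv_rpow,
          ← ENNReal.rpow_neg]
        congr 1
        conv_lhs => rw [← ENNReal.rpow_one (W x), ← ENNReal.rpow_mul, ← ENNReal.rpow_add _ _ h0 ht]
        congr 1
        field_simp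
        ring
    _ ≤ C0 ^ (q / (q - 1)) * (C1 * (C2 * ∫⁻ x, (f x * (S x)⁻¹) ^ q ∂(volume.withDensity S))) :=
        mul_le_mul_right (mul_le_mul_right (h2 _ _ (by fun_prop)) _) _
    _ = C0 ^ (q / (q - 1)) * (C1 * (C2 * ∫⁻ x, f x ^ q * W x)) := by
        congr 3
        rw [lintegral_withDensity_eq_lintegral_mul _ hSm (by fun_prop)]
        refine lintegral_congr_ae ?_
        filter_upwards [hW0, hWt] with x h0 ht
        simp only [Pi.mul_apply, hS]
        rw [ENNReal.mul_rpow_of_nonneg _ _ (by positivity), mul_left_comm]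
        congr 1
        rw [← ENNReal.rpow_neg, ← ENNReal.rpow_mul, ← ENNReal.rpow_add _ _ h0 ht]
        conv_rhs => rw [← ENNReal.rpow_one (W x)]
        congr 1
        field_simp
        ring
    _ = _ := by ring
end

/-! ### Mollification and the pointwise inequality for functions with a weak gradient -/

section
open ContinuousLinearMap Convolution Filter Topology

/-- A smooth bump function equal to `1` on the ball of radius `2 ^ (k - 1)` about the origin and
supported in the ball of radius `2 ^ k`. -/
noncomputable def dyadicBump (n : ℕ) (k : ℤ) : ContDiffBump (0 : EuclideanSpace ℝ (Fin n)) where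
  rIn := 2 ^ (k - 1)
  rOut := 2 ^ k
  rIn_pos := by positivity
  rIn_lt_rOut := zpow_lt_zpow_right₀ (by norm_num) (by lia)

/-- The mollification of `f` at scale `2 ^ k`: convolution with the normalised `dyadicBump n k`. -/
noncomputable def moll {n : ℕ} (k : ℤ) (f : EuclideanSpace ℝ (Fin n) → ℝ) :
    EuclideanSpace ℝ (Fin n) → ℝ :=
  (dyadicBump n k).normed volume ⋆[lsmul ℝ ℝ, volume] f

variable {n : ℕ} {f : EuclideanSpace ℝ (Fin n) → ℝ}

lemma convolution_assoc_smooth {a b f : EuclideanSpace ℝ (Fin n) → ℝ} (ha : Continuous a)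
    (hac : HasCompactSupport a) (hb : Continuous b) (hbc : HasCompactSupport b)
    (hf : LocallyIntegrable f volume) :
    (a ⋆[lsmul ℝ ℝ, volume] b) ⋆[lsmul ℝ ℝ, volume] f =
      a ⋆[lsmul ℝ ℝ, volume] (b ⋆[lsmul ℝ ℝ, volume] f) := by
  have hfn : LocallyIntegrable (fun x => ‖f x‖) volume := fun x => by
    obtain ⟨s, hs, h⟩ := hf x
    exact ⟨s, hs, h.norm⟩
  ext x
  refine convolution_assoc (lsmul ℝ ℝ) (lsmul ℝ ℝ) (lsmul ℝ ℝ) (lsmul ℝ ℝ) ?_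
    ha.aestronglyMeasurable hb.aestronglyMeasurable hf.aestronglyMeasurable ?_ ?_ ?_
  · intro x y z; simp [mul_assoc]
  · exact Eventually.of_forall fun y =>
      hac.convolutionExists_left _ ha hb.locallyIntegrable y
  · exact Eventually.of_forall fun y =>
      hbc.norm.convolutionExists_left _ hb.norm hfn y
  · exact hac.norm.convolutionExists_left _ ha.norm
      (hbc.norm.continuous_convolution_left _ hb.norm hfn).locallyIntegrable x

lemma moll_comm (k l : ℤ) (hf : LocallyIntegrable f volume) :
    moll k (moll l f) = moll l (moll k f) := by
  unfold moll
  rw [← convolution_assoc_smooth (dyadicBump n k).continuous_normed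
      (dyadicBump n k).hasCompactSupport_normed (dyadicBump n l).continuous_normed
      (dyadicBump n l).hasCompactSupport_normed hf,
    ← convolution_assoc_smooth (dyadicBump n l).continuous_normed
      (dyadicBump n l).hasCompactSupport_normed (dyadicBump n k).continuous_normed
      (dyadicBump n k).hasCompactSupport_normed hf]
  congr 1
  ext x
  rw [convolution_lsmul_swap, convolution_lsmul]
  simp_rw [smul_eq_mul, mul_comm]

lemma continuous_moll (k : ℤ) (hf : LocallyIntegrable f volume) : Continuous (moll k f) :=
  (dyadicBump n k).hasCompactSupport_normed.continuous_convolution_left _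
    (dyadicBump n k).continuous_normed hf

/-- Differentiation under the integral sign for `z ↦ ∫ f(t) η(z - t) dt`, with the derivative falling
on `η`. -/
lemma hasFDerivAt_conv {η : EuclideanSpace ℝ (Fin n) → ℝ} (hη : ContDiff ℝ 1 η)
    (hηc : HasCompactSupport η) (hf : LocallyIntegrable f volume) (z : EuclideanSpace ℝ (Fin n)) :
    ∃ L : EuclideanSpace ℝ (Fin n) →L[ℝ] ℝ,
      HasFDerivAt (fun z => ∫ t, f t * η (z - t)) L z ∧
      ∀ v, L v = ∫ t, f t * fderiv ℝ η (z - t) v := by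
  refine ⟨_, hηc.hasFDerivAt_convolution_right (lsmul ℝ ℝ) hf hη z, fun v => ?_⟩
  rw [convolution_precompR_apply _ hf (hηc.fderiv ℝ) (hη.continuous_fderiv one_ne_zero)]
  rfl

lemma moll_eq (k : ℤ) (f : EuclideanSpace ℝ (Fin n) → ℝ) :
    moll k f = fun z => ∫ t, f t * (dyadicBump n k).normed volume (z - t) := by
  ext z
  rw [moll, convolution_lsmul_swap]
  simp_rw [smul_eq_mul, mul_comm]

/-- The derivative of a mollification at `z` is at most a constant times the average of the weak
gradient over the ball of radius `2 ^ k` about `z`. -/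
lemma fderiv_moll_le {gf : EuclideanSpace ℝ (Fin n) → EuclideanSpace ℝ (Fin n)}
    (hg : IsWeakGrad f gf) (k : ℤ) (z : EuclideanSpace ℝ (Fin n)) :
    DifferentiableAt ℝ (moll k f) z ∧
    ‖fderiv ℝ (moll k f) z‖ₑ ≤ n * (ENNReal.ofReal (2 ^ n) *
      ((∫⁻ t in closedBall z (2 ^ k), ‖gf t‖ₑ) / volume (closedBall z ((2 : ℝ) ^ k)))) := by
  obtain ⟨hf, hgf, hweak⟩ := hg
  set η := (dyadicBump n k).normed volume with hη
  have hηs : ContDiff ℝ (⊤ : ℕ∞) η := (dyadicBump n k).contDiff_normed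
  have hηc : HasCompactSupport η := (dyadicBump n k).hasCompactSupport_normed
  have hη0 : ∀ x, 0 ≤ η x := (dyadicBump n k).nonneg_normed
  obtain ⟨L, hL, hLv⟩ := hasFDerivAt_conv (hηs.of_le (by exact_mod_cast le_top)) hηc hf z
  rw [moll_eq k f, hL.fderiv]
  refine ⟨hL.differentiableAt, ?_⟩
  set A := ENNReal.ofReal (2 ^ n) *
      ((∫⁻ t in closedBall z (2 ^ k), ‖gf t‖ₑ) / volume (closedBall z ((2 : ℝ) ^ k))) with hA
  -- the test function `t ↦ η (z - t)` turns the derivative of the mollification into an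
  -- average of the weak gradient
  have hLe : ∀ i : Fin n, L (EuclideanSpace.single i 1) = ∫ t, gf t i * η (z - t) := by
    intro i
    have h1 := hweak (fun t => η (z - t)) (by fun_prop)
      (hηc.comp_homeomorph (Homeomorph.subLeft z)) i
    have h2 : ∀ t, fderiv ℝ (fun t => η (z - t)) t = - fderiv ℝ η (z - t) := by
      intro t
      have h3 : HasFDerivAt η (fderiv ℝ η (z - t)) (z - t) :=
        (hηs.differentiable (by simp) _).hasFDerivAt
      have h4 := h3.comp t ((hasFDerivAt_id t).const_sub z)
      have h5 : fderiv ℝ (fun t => η (z - t)) t = _ := h4.fderiv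
      rw [h5]
      ext v; simp
    simp_rw [h2] at h1
    rw [hLv, ← neg_inj, ← h1, ← integral_neg]
    simp
  have hAe : ∀ i : Fin n, ‖L (EuclideanSpace.single i 1)‖ₑ ≤ A := by
    intro i
    rw [hLe]
    have hηle : ∀ t, ‖η t‖ₑ ≤ ENNReal.ofReal (2 ^ n) / volume (closedBall z ((2 : ℝ) ^ k)) := by
      intro t
      have h1 := (dyadicBump n k).normed_le_div_measure_closedBall_rOut volume 2
        (le_of_eq (by simp only [dyadicBump]; rw [zpow_sub_one₀ (by norm_num)]; ring)) t
      rw [Real.enorm_eq_ofReal (hη0 t)]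
      refine (ENNReal.ofReal_le_ofReal h1).trans ?_
      have h2 : volume (closedBall (0 : EuclideanSpace ℝ (Fin n)) (dyadicBump n k).rOut) =
          volume (closedBall z ((2 : ℝ) ^ k)) :=
        (Measure.addHaar_closedBall_center volume _ _).trans
          (Measure.addHaar_closedBall_center volume z _).symm
      have h3 : 0 < volume.real (closedBall (0 : EuclideanSpace ℝ (Fin n)) (dyadicBump n k).rOut) :=
        ENNReal.toReal_pos (measure_closedBall_pos _ _ (dyadicBump n k).rOut_pos).ne'
          measure_closedBall_lt_top.ne
      rw [ENNReal.ofReal_div_of_pos h3, ofReal_measureReal measure_closedBall_lt_top.ne, h2]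
      simp
    calc ‖∫ t, gf t i * η (z - t)‖ₑ ≤ ∫⁻ t, ‖gf t i * η (z - t)‖ₑ :=
          enorm_integral_le_lintegral_enorm _
      _ ≤ ∫⁻ t, (closedBall z ((2 : ℝ) ^ k)).indicator (fun t => ‖gf t‖ₑ *
            (ENNReal.ofReal (2 ^ n) / volume (closedBall z ((2 : ℝ) ^ k)))) t := by
          refine lintegral_mono fun t => ?_
          by_cases ht : t ∈ closedBall z ((2 : ℝ) ^ k)
          · rw [indicator_of_mem ht, enorm_mul]
            gcongr
            · rw [enorm_le_iff_norm_le]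
              exact PiLp.norm_apply_le _ i
            · exact hηle _
          · have : η (z - t) = 0 := by
              have h4 : z - t ∉ Function.support η := by
                rw [hη, ContDiffBump.support_normed_eq]
                intro h
                apply ht
                rw [mem_ball_zero_iff] at h
                rw [mem_closedBall, dist_comm, dist_eq_norm]
                exact h.le
              simpa using h4
            simp [this]
      _ = A := by
          rw [lintegral_indicator measurableSet_closedBall, lintegral_mul_const'', hA]
          · rw [div_eq_mul_inv, div_eq_mul_inv]; ring
          · exact hgf.aestronglyMeasurable.enorm.restrict
  by_cases hAt : n * A = ⊤
  · rw [hAt]; exact le_top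
  rcases Nat.eq_zero_or_pos n with rfl | hn
  · have : L = 0 := by ext v; rw [Subsingleton.elim v 0]; simp
    rw [← ofReal_norm, this, norm_zero, ENNReal.ofReal_zero]; exact zero_le
  have hAt' : A ≠ ⊤ := by
    rintro h
    rw [h, ENNReal.mul_top (by exact_mod_cast hn.ne')] at hAt
    exact hAt rfl
  have hle : ‖L‖ ≤ n * A.toReal := by
    refine L.opNorm_le_bound (by positivity) fun v => ?_
    have hv : v = ∑ i, v i • EuclideanSpace.single i (1 : ℝ) := by
      ext j; simp [Finset.sum_apply, Pi.single_apply]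
    calc ‖L v‖ = ‖∑ i, v i * L (EuclideanSpace.single i 1)‖ := by
          conv_lhs => rw [hv]
          simp [map_sum]
      _ ≤ ∑ i, ‖v i * L (EuclideanSpace.single i 1)‖ := norm_sum_le _ _
      _ ≤ ∑ i : Fin n, ‖v‖ * A.toReal := by
          refine Finset.sum_le_sum fun i _ => ?_
          rw [norm_mul]
          gcongr
          · exact PiLp.norm_apply_le _ i
          · rw [← toReal_enorm]
            exact ENNReal.toReal_mono hAt' (hAe i)
      _ = n * A.toReal * ‖v‖ := by simp; ring
  calc ‖L‖ₑ = ENNReal.ofReal ‖L‖ := (ofReal_norm L).symm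
    _ ≤ ENNReal.ofReal (n * A.toReal) := ENNReal.ofReal_le_ofReal hle
    _ = n * A := by
      rw [ENNReal.ofReal_mul (by positivity), ENNReal.ofReal_toReal hAt', ENNReal.ofReal_natCast]

/-- The factor `8 ^ n` is `2 ^ n` from `fderiv_moll_le` times `4 ^ n` from enlarging a ball of radius
`2 ^ k` about a point of `closedBall x (3 * 2 ^ k)` to one of radius `2 ^ (k + 2)` about `x`. -/
lemma moll_lipschitz {gf : EuclideanSpace ℝ (Fin n) → EuclideanSpace ℝ (Fin n)}
    (hg : IsWeakGrad f gf) (x : EuclideanSpace ℝ (Fin n))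
    (hx : maxFn volume (fun t => ‖gf t‖ₑ) x ≠ ⊤) (k : ℤ)
    {z : EuclideanSpace ℝ (Fin n)} (hz : z ∈ closedBall x (3 * 2 ^ k)) :
    dist (moll k f z) (moll k f x) ≤
      n * 8 ^ n * (maxFn volume (fun t => ‖gf t‖ₑ) x).toReal * dist z x := by
  set M := maxFn volume (fun t => ‖gf t‖ₑ) x with hM
  have hbound : ∀ y ∈ closedBall x (3 * (2 : ℝ) ^ k), ‖fderiv ℝ (moll k f) y‖ ≤
      n * 8 ^ n * M.toReal := by
    intro y hy
    rw [mem_closedBall] at hy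
    have h4 : (2 : ℝ) ^ (k + 2) = 4 * 2 ^ k := by
      rw [zpow_add₀ (by norm_num)]; norm_num [mul_comm]
    have hk : (0 : ℝ) < 2 ^ k := by positivity
    have h1 : ‖fderiv ℝ (moll k f) y‖ₑ ≤ n * 8 ^ n * M := by
      refine (fderiv_moll_le hg k y).2.trans ?_
      rw [mul_assoc]
      refine mul_le_mul_right ?_ _
      have hvol : volume (closedBall x ((2 : ℝ) ^ (k + 2))) =
          ENNReal.ofReal (4 ^ n) * volume (closedBall y ((2 : ℝ) ^ k)) := by
        rw [h4, volume_closedBall_mul x y (by norm_num) hk.le]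
      have h5 : (∫⁻ t in closedBall y (2 ^ k), ‖gf t‖ₑ) / volume (closedBall y ((2 : ℝ) ^ k)) ≤
          ENNReal.ofReal (4 ^ n) * M := by
        calc _ ≤ (∫⁻ t in closedBall x (2 ^ (k + 2)), ‖gf t‖ₑ) /
              volume (closedBall y ((2 : ℝ) ^ k)) := by
              gcongr
              refine closedBall_subset_closedBall' ?_
              rw [h4]; linarith
          _ = ENNReal.ofReal (4 ^ n) * ((∫⁻ t in closedBall x (2 ^ (k + 2)), ‖gf t‖ₑ) /
              volume (closedBall x ((2 : ℝ) ^ (k + 2)))) := by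
              rw [hvol, div_eq_mul_inv, div_eq_mul_inv, ENNReal.mul_inv (by simp) (by simp),
                mul_left_comm (∫⁻ t in closedBall x (2 ^ (k + 2)), ‖gf t‖ₑ), ← mul_assoc,
                ENNReal.mul_inv_cancel (by simp) (by simp), one_mul]
          _ ≤ _ := mul_le_mul_right (le_iSup (fun k : ℤ =>
              (∫⁻ t in closedBall x (2 ^ k), ‖gf t‖ₑ) / volume (closedBall x ((2 : ℝ) ^ k))) (k + 2)) _
      refine (mul_le_mul_right h5 _).trans_eq ?_
      rw [← mul_assoc, ← ENNReal.ofReal_mul (by positivity), ← mul_pow]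
      congr 1
      rw [ENNReal.ofReal_pow (by norm_num)]
      norm_num
    rw [← toReal_enorm]
    refine (ENNReal.toReal_mono ?_ h1).trans_eq (by simp)
    exact ENNReal.mul_ne_top (ENNReal.mul_ne_top (by simp) (by simp)) hx
  rw [dist_eq_norm, dist_eq_norm]
  exact (convex_closedBall x _).norm_image_sub_le_of_norm_fderiv_le
    (fun y _ => (fderiv_moll_le hg k y).1) hbound (mem_closedBall_self (by positivity)) hz

/-- Consecutive mollifications are both compared with `moll k (moll (k + 1) f)`, which averages
`moll (k + 1) f` over a ball of radius `2 ^ k` and, by commutativity, also averages `moll k f` over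
a ball of radius `2 ^ (k + 1)`. -/
lemma moll_step {gf : EuclideanSpace ℝ (Fin n) → EuclideanSpace ℝ (Fin n)}
    (hg : IsWeakGrad f gf) (x : EuclideanSpace ℝ (Fin n))
    (hx : maxFn volume (fun t => ‖gf t‖ₑ) x ≠ ⊤) (k : ℤ) :
    dist (moll k f x) (moll (k + 1) f x) ≤
      3 * 2 ^ k * (n * 8 ^ n * (maxFn volume (fun t => ‖gf t‖ₑ) x).toReal) := by
  set M := n * 8 ^ n * (maxFn volume (fun t => ‖gf t‖ₑ) x).toReal with hM
  have hM0 : 0 ≤ M := by positivity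
  have h2 : (2 : ℝ) ^ (k + 1) = 2 * 2 ^ k := by
    rw [zpow_add₀ (by norm_num)]; norm_num [mul_comm]
  have hk : (0 : ℝ) < 2 ^ k := by positivity
  have key : ∀ i j : ℤ, (2 : ℝ) ^ j ≤ 3 * 2 ^ i →
      dist (moll j (moll i f) x) (moll i f x) ≤ M * 2 ^ j := by
    intro i j hij
    refine ContDiffBump.dist_normed_convolution_le
      (continuous_moll i hg.1).aestronglyMeasurable fun y hy => ?_
    have hy' : dist y x < 2 ^ j := hy
    exact (moll_lipschitz hg x hx i (mem_closedBall.2 (hy'.le.trans hij))).trans (by gcongr)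
  have h3 := key k (k + 1) (by rw [h2]; linarith)
  have h4 := key (k + 1) k (by rw [h2]; linarith)
  rw [moll_comm _ _ hg.1, dist_comm] at h3
  have := dist_triangle (moll k f x) (moll k (moll (k + 1) f) x) (moll (k + 1) f x)
  rw [h2] at h3
  linarith

/-- Telescoping `moll_step` down to arbitrarily small scales. -/
lemma moll_limit {gf : EuclideanSpace ℝ (Fin n) → EuclideanSpace ℝ (Fin n)}
    (hg : IsWeakGrad f gf) (x : EuclideanSpace ℝ (Fin n))
    (hx : maxFn volume (fun t => ‖gf t‖ₑ) x ≠ ⊤)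
    (hlim : Tendsto (fun j : ℕ => moll (-(j : ℤ)) f x) atTop (𝓝 (f x))) (m : ℤ) :
    dist (f x) (moll m f x) ≤
      3 * 2 ^ m * (n * 8 ^ n * (maxFn volume (fun t => ‖gf t‖ₑ) x).toReal) := by
  have hstep := moll_step hg x hx
  set M := n * 8 ^ n * (maxFn volume (fun t => ‖gf t‖ₑ) x).toReal with hM
  have hM0 : 0 ≤ M := by positivity
  have hsum : ∀ j : ℕ, dist (moll (m - j) f x) (moll m f x) ≤
      3 * (2 ^ m - 2 ^ (m - (j : ℤ))) * M := by
    intro j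
    induction j with
    | zero => simp
    | succ j ih =>
      have h1 := hstep (m - (j + 1 : ℕ))
      have e : m - ((j + 1 : ℕ) : ℤ) + 1 = m - j := by push_cast; ring
      have h2 : (2 : ℝ) ^ (m - (j : ℤ)) = 2 * 2 ^ (m - ((j + 1 : ℕ) : ℤ)) := by
        rw [← e, zpow_add₀ (by norm_num)]; norm_num [mul_comm]
      rw [e] at h1
      have h3 := dist_triangle (moll (m - (j + 1 : ℕ)) f x) (moll (m - j) f x) (moll m f x)
      rw [h2] at ih
      linarith
  have hev : ∀ᶠ j : ℕ in atTop, dist (moll (-(j : ℤ)) f x) (moll m f x) ≤ 3 * 2 ^ m * M := by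
    filter_upwards [eventually_ge_atTop (-m).toNat] with j hj
    have hj' : 0 ≤ m + j := by have := Int.self_le_toNat (-m); lia
    have h1 := hsum (m + j).toNat
    rw [Int.toNat_of_nonneg hj', show m - (m + j) = -(j : ℤ) by ring] at h1
    refine h1.trans ?_
    have : (0 : ℝ) < 2 ^ (-(j : ℤ)) := by positivity
    gcongr
    linarith
  exact le_of_tendsto (hlim.dist tendsto_const_nhds) hev

/-- Lebesgue's differentiation theorem in its mollifier form. -/
lemma ae_moll_tendsto (hf : LocallyIntegrable f volume) :
    ∀ᵐ x, Tendsto (fun j : ℕ => moll (-(j : ℤ)) f x) atTop (𝓝 (f x)) := by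
  refine ContDiffBump.ae_convolution_tendsto_right_of_locallyIntegrable
    (φ := fun j : ℕ => dyadicBump n (-(j : ℤ))) (K := 2) ?_ ?_ hf
  · have : Tendsto (fun j : ℕ => ((2 : ℝ)⁻¹) ^ j) atTop (𝓝 0) :=
      tendsto_pow_atTop_nhds_zero_of_lt_one (by norm_num) (by norm_num)
    refine this.congr fun j => ?_
    simp [dyadicBump]
  · refine Eventually.of_forall fun j => le_of_eq ?_
    simp only [dyadicBump]; rw [zpow_sub_one₀ (by norm_num)]; ring

/-- The pointwise inequality with `g` a multiple of the maximal function of `|∇f|`, at points where the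
maximal function is finite and the mollifications converge to `f`. -/
theorem sobolev_pointwise {gf : EuclideanSpace ℝ (Fin n) → EuclideanSpace ℝ (Fin n)}
    (hg : IsWeakGrad f gf) {x y : EuclideanSpace ℝ (Fin n)}
    (hx : maxFn volume (fun t => ‖gf t‖ₑ) x ≠ ⊤) (hy : maxFn volume (fun t => ‖gf t‖ₑ) y ≠ ⊤)
    (hlx : Tendsto (fun j : ℕ => moll (-(j : ℤ)) f x) atTop (𝓝 (f x)))
    (hly : Tendsto (fun j : ℕ => moll (-(j : ℤ)) f y) atTop (𝓝 (f y))) :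
    |f x - f y| ≤ dist x y * (7 * n * 8 ^ n * (maxFn volume (fun t => ‖gf t‖ₑ) x).toReal +
      7 * n * 8 ^ n * (maxFn volume (fun t => ‖gf t‖ₑ) y).toReal) := by
  rcases eq_or_ne x y with rfl | hxy
  · simp
  -- `2 ^ k < |x - y| ≤ 2 ^ (k + 1)`, so that `y` lies well within reach of scale `2 ^ (k + 1)`
  obtain ⟨k, hk1, hk2⟩ := exists_mem_Ioc_zpow (dist_pos.2 hxy) (one_lt_two (α := ℝ))
  have h1 := moll_limit hg x hx hlx (k + 1)
  have h2 := moll_limit hg y hy hly (k + 1)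
  have h0 : (0 : ℝ) < 2 ^ (k + 1) := by positivity
  have h3 := moll_lipschitz hg x hx (k + 1) (z := y)
    (by rw [mem_closedBall, dist_comm]; linarith)
  set A := (maxFn volume (fun t => ‖gf t‖ₑ) x).toReal
  set B := (maxFn volume (fun t => ‖gf t‖ₑ) y).toReal
  have hA : 0 ≤ (n : ℝ) * 8 ^ n * A := by positivity
  have hB : 0 ≤ (n : ℝ) * 8 ^ n * B := by positivity
  have e : (2 : ℝ) ^ (k + 1) = 2 * 2 ^ k := by
    rw [zpow_add₀ (by norm_num)]; norm_num [mul_comm]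
  rw [← Real.dist_eq]
  have h4 := dist_triangle4 (f x) (moll (k + 1) f x) (moll (k + 1) f y) (f y)
  rw [dist_comm (f y)] at h2
  rw [dist_comm (moll (k + 1) f y), dist_comm y x] at h3
  have h5 : 2 ^ k * ((n : ℝ) * 8 ^ n * A) ≤ dist x y * (n * 8 ^ n * A) := by gcongr
  have h6 : 2 ^ k * ((n : ℝ) * 8 ^ n * B) ≤ dist x y * (n * 8 ^ n * B) := by gcongr
  have h7 : 0 ≤ dist x y * ((n : ℝ) * 8 ^ n * B) := by positivity
  rw [e] at h1 h2
  linarith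
end

/-! ### A weak gradient in the weighted space gives the pointwise inequality -/

section
open Filter Topology

variable {n : ℕ} {q : ℝ} {f : EuclideanSpace ℝ (Fin n) → ℝ} {w : EuclideanSpace ℝ (Fin n) → ℝ}

lemma wLqNorm_ne_top_iff (hq : 1 < q) (v f : EuclideanSpace ℝ (Fin n) → ℝ) :
    wLqNorm q v univ f ≠ ⊤ ↔ ∫⁻ x, ‖f x‖ₑ ^ q * ENNReal.ofReal (v x) ≠ ⊤ := by
  have h : 0 < 1 / q := by positivity
  unfold wLqNorm
  rw [Measure.restrict_univ, Ne, ENNReal.rpow_eq_top_iff_of_pos h]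
  simp_rw [← Real.norm_eq_abs, ofReal_norm]

/-- A function with a weak gradient in `L^q(w)` satisfies the pointwise inequality for some
`g ∈ L^q(w)`. -/
theorem forward (hq : 1 < q)
    (hw_meas : Measurable w) (hw_pos : ∀ᵐ x ∂volume, 0 < w x) (hw : MemAq q w)
    {gf : EuclideanSpace ℝ (Fin n) → EuclideanSpace ℝ (Fin n)} (hg : IsWeakGrad f gf)
    (hgq : wLqNorm q w univ (fun x => ‖gf x‖) ≠ ⊤) :
    ∃ g : EuclideanSpace ℝ (Fin n) → ℝ, (∀ x, 0 ≤ g x) ∧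
        AEMeasurable g volume ∧ wLqNorm q w univ g ≠ ⊤ ∧
        ∃ S : Set (EuclideanSpace ℝ (Fin n)), volume S = 0 ∧
          ∀ x ∉ S, ∀ y ∉ S, |f x - f y| ≤ dist x y * (g x + g y) := by
  have hWm : Measurable fun x => ENNReal.ofReal (w x) := hw_meas.ennreal_ofReal
  have hW0 : ∀ᵐ x, ENNReal.ofReal (w x) ≠ 0 := by
    filter_upwards [hw_pos] with x hx
    simpa using hx
  have hWt : ∀ᵐ x, ENNReal.ofReal (w x) ≠ ⊤ := by simp
  obtain ⟨C, hC, hmax⟩ := muckenhoupt hq hWm hW0 hWt (hw.ballAq hq hw_pos)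
  have hm : AEMeasurable (fun t => ‖gf t‖ₑ) volume := hg.2.1.aestronglyMeasurable.enorm
  set h' := hm.mk with hh'
  have hM : maxFn volume (fun t => ‖gf t‖ₑ) = maxFn volume h' := by
    ext x
    unfold maxFn
    refine iSup_congr fun k => ?_
    rw [lintegral_congr_ae (ae_restrict_of_ae hm.ae_eq_mk)]
  rw [wLqNorm_ne_top_iff hq] at hgq
  simp_rw [enorm_norm] at hgq
  have hfin : ∫⁻ x, maxFn volume h' x ^ q * ENNReal.ofReal (w x) ≠ ⊤ := by
    refine ne_top_of_le_ne_top (ENNReal.mul_ne_top hC ?_) (hmax h' hm.measurable_mk)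
    convert hgq using 1
    refine lintegral_congr_ae ?_
    filter_upwards [hm.ae_eq_mk] with x hx
    rw [hh', ← hx]
  have hMm : Measurable (maxFn volume h') := measurable_maxFn volume hm.measurable_mk
  have hprod : Measurable fun x => maxFn volume h' x ^ q * ENNReal.ofReal (w x) :=
    (hMm.pow_const q).mul hWm
  have hMt : ∀ᵐ x, maxFn volume h' x ≠ ⊤ := by
    filter_upwards [ae_lt_top hprod hfin, hW0] with x hx hx0 htop
    rw [htop, ENNReal.top_rpow_of_pos (by linarith), ENNReal.top_mul hx0] at hx
    exact hx.ne rfl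
  refine ⟨fun x => 7 * n * 8 ^ n * (maxFn volume h' x).toReal, fun x => by positivity,
    (hMm.ennreal_toReal.const_mul _).aemeasurable, ?_,
    {x | ¬ (maxFn volume h' x ≠ ⊤ ∧
      Tendsto (fun j : ℕ => moll (-(j : ℤ)) f x) atTop (𝓝 (f x)))}, ?_, ?_⟩
  · rw [wLqNorm_ne_top_iff hq]
    refine ne_top_of_le_ne_top (b := ENNReal.ofReal (7 * n * 8 ^ n) ^ q *
      ∫⁻ x, maxFn volume h' x ^ q * ENNReal.ofReal (w x)) ?_ ?_
    · exact ENNReal.mul_ne_top (ENNReal.rpow_ne_top_of_nonneg (by linarith) ofReal_ne_top) hfin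
    · rw [← lintegral_const_mul _ hprod]
      refine lintegral_mono fun x => ?_
      rw [← mul_assoc, ← ENNReal.mul_rpow_of_nonneg _ _ (by linarith : 0 ≤ q)]
      gcongr
      rw [enorm_mul, Real.enorm_of_nonneg (by positivity)]
      gcongr
      rw [Real.enorm_of_nonneg toReal_nonneg]
      exact ENNReal.ofReal_toReal_le
  · exact ae_iff.1 (hMt.and (ae_moll_tendsto hg.1))
  · intro x hx y hy
    simp only [Set.mem_ofPred_eq, not_not] at hx hy
    have := sobolev_pointwise hg (x := x) (y := y) (by rw [hM]; exact hx.1)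
      (by rw [hM]; exact hy.1) hx.2 hy.2
    rwa [hM] at this
end

/-! ### Representation of dominated functionals on test functions -/

section
open Filter Topology

/-- A linear functional on a vector space `T` dominated by the pullback of a Hilbert norm along a
linear map `ι` is represented by a vector of the Hilbert space. The map `ι` may fail to be
injective; the bound makes the functional factor through its range, from where Hahn–Banach extends
it. -/
lemma riesz_of_bound {T H : Type*} [AddCommGroup T] [Module ℝ T] [NormedAddCommGroup H]
    [InnerProductSpace ℝ H] [CompleteSpace H] (ι : T →ₗ[ℝ] H) (Λ : T →ₗ[ℝ] ℝ) (C : ℝ)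
    (h : ∀ φ, |Λ φ| ≤ C * ‖ι φ‖) : ∃ u : H, ∀ φ, Λ φ = inner ℝ u (ι φ) := by
  obtain ⟨s, hs⟩ := ι.rangeRestrict.exists_rightInverse_of_surjective ι.range_rangeRestrict
  have hs' : ∀ p : LinearMap.range ι, ι (s p) = p := fun p => by
    have := congrArg Subtype.val (LinearMap.congr_fun hs p)
    simpa using this
  let ℓ : LinearMap.range ι →L[ℝ] ℝ := (Λ ∘ₗ s).mkContinuous C fun p => by
    have := h (s p)
    rw [hs'] at this
    simpa using this
  obtain ⟨L, hL, -⟩ := exists_extension_norm_eq _ ℓ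
  refine ⟨(InnerProductSpace.toDual ℝ H).symm L, fun φ => ?_⟩
  rw [InnerProductSpace.toDual_symm_apply]
  have h1 := hL ⟨ι φ, LinearMap.mem_range_self ι φ⟩
  have h2 : ℓ ⟨ι φ, LinearMap.mem_range_self ι φ⟩ = Λ (s ⟨ι φ, LinearMap.mem_range_self ι φ⟩) := rfl
  rw [h1, h2]
  have h3 := h (φ - s ⟨ι φ, LinearMap.mem_range_self ι φ⟩)
  rw [map_sub ι, hs', sub_self, norm_zero, mul_zero] at h3
  have h4 := abs_nonpos_iff.1 h3
  rw [map_sub, sub_eq_zero] at h4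
  exact h4

/-- The space `C_c^∞(ℝⁿ)` of real test functions, as a subspace of all functions. -/
def testFn (n : ℕ) : Submodule ℝ (EuclideanSpace ℝ (Fin n) → ℝ) where
  carrier := {φ | ContDiff ℝ (⊤ : ℕ∞) φ ∧ HasCompactSupport φ}
  add_mem' h1 h2 := ⟨h1.1.add h2.1, h1.2.add h2.2⟩
  zero_mem' := ⟨contDiff_const, HasCompactSupport.zero⟩
  smul_mem' _ _ h := ⟨contDiff_const.smul h.1, h.2.smul_left⟩

variable {n : ℕ}

/-- A positive weight `b`, bounded below on each ball centred at the origin, for which `∫ G b` is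
finite: `b = ∑ₘ 2⁻ᵐ (1 + ∫_{B_m} G)⁻¹ 1_{B_m}` with `B_m` the ball of radius `m`. -/
lemma exists_weight {G : EuclideanSpace ℝ (Fin n) → ℝ≥0∞} (hG : Measurable G)
    (hGfin : ∀ m : ℕ, ∫⁻ x in closedBall 0 (m : ℝ), G x ≠ ⊤) :
    ∃ b : EuclideanSpace ℝ (Fin n) → ℝ≥0∞, Measurable b ∧ (∀ x, b x ≠ 0) ∧ (∀ x, b x ≠ ⊤) ∧
      ∫⁻ x, G x * b x ≠ ⊤ ∧
      ∀ m : ℕ, ∃ δ : ℝ≥0∞, δ ≠ 0 ∧ ∀ x ∈ closedBall (0 : EuclideanSpace ℝ (Fin n)) (m : ℝ), δ ≤ b x := by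
  set I : ℕ → ℝ≥0∞ := fun m => ∫⁻ x in closedBall 0 (m : ℝ), G x with hI
  set c : ℕ → ℝ≥0∞ := fun m => 2⁻¹ ^ m / (1 + I m) with hc
  have hc1 : ∀ m, c m ≤ 2⁻¹ ^ m := fun m => ENNReal.div_le_of_le_mul (by
    calc (2⁻¹ : ℝ≥0∞) ^ m = 2⁻¹ ^ m * 1 := (mul_one _).symm
      _ ≤ _ := mul_le_mul_right le_self_add _)
  have hcI : ∀ m, c m * I m ≤ 2⁻¹ ^ m := fun m => by
    rw [hc]
    simp only
    rw [div_eq_mul_inv, mul_assoc]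
    calc (2⁻¹ : ℝ≥0∞) ^ m * ((1 + I m)⁻¹ * I m) ≤ 2⁻¹ ^ m * ((1 + I m)⁻¹ * (1 + I m)) :=
          mul_le_mul_right (mul_le_mul_right le_add_self _) _
      _ ≤ 2⁻¹ ^ m * 1 := mul_le_mul_right (ENNReal.inv_mul_le_one _) _
      _ = _ := mul_one _
  have hc0 : ∀ m, c m ≠ 0 := fun m => by
    rw [hc]
    exact (ENNReal.div_pos (by simp) (by simpa using hGfin m)).ne'
  set b : EuclideanSpace ℝ (Fin n) → ℝ≥0∞ := fun x =>
    ∑' m : ℕ, (closedBall (0 : EuclideanSpace ℝ (Fin n)) (m : ℝ)).indicator (fun _ => c m) x with hb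
  have hgeo : ∑' m : ℕ, (2⁻¹ : ℝ≥0∞) ^ m ≠ ⊤ := by
    rw [ENNReal.tsum_geometric]; simp
  have hlow : ∀ m : ℕ, ∀ x ∈ closedBall (0 : EuclideanSpace ℝ (Fin n)) (m : ℝ), c m ≤ b x := by
    intro m x hx
    calc c m = (closedBall (0 : EuclideanSpace ℝ (Fin n)) (m : ℝ)).indicator (fun _ => c m) x := by
          rw [indicator_of_mem hx]
      _ ≤ b x := ENNReal.le_tsum m
  refine ⟨b, Measurable.tsum fun m => measurable_const.indicator measurableSet_closedBall,
    fun x => ?_, fun x => ?_, ?_, fun m => ⟨c m, hc0 m, hlow m⟩⟩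
  · obtain ⟨m, hm⟩ := exists_nat_ge ‖x‖
    have := hlow m x (by simpa using hm)
    exact (lt_of_lt_of_le (pos_iff_ne_zero.2 (hc0 m)) this).ne'
  · refine ne_top_of_le_ne_top hgeo (ENNReal.tsum_le_tsum fun m => ?_)
    exact (indicator_le_self _ _ x).trans (hc1 m)
  · simp_rw [hb, ← ENNReal.tsum_mul_left]
    have hmeas : ∀ m : ℕ, AEMeasurable (fun x => G x *
        (closedBall (0 : EuclideanSpace ℝ (Fin n)) (m : ℝ)).indicator (fun _ => c m) x) volume :=
      fun m => (hG.mul (measurable_const.indicator measurableSet_closedBall)).aemeasurable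
    rw [lintegral_tsum hmeas]
    refine ne_top_of_le_ne_top hgeo (ENNReal.tsum_le_tsum fun m => ?_)
    refine le_of_eq_of_le ?_ (hcI m)
    rw [hI, ← lintegral_const_mul _ hG, ← lintegral_indicator measurableSet_closedBall]
    refine lintegral_congr fun x => ?_
    by_cases hx : x ∈ closedBall (0 : EuclideanSpace ℝ (Fin n)) (m : ℝ)
    · simp only [indicator_of_mem hx, mul_comm]
    · simp only [indicator_of_notMem hx, mul_zero]

/-- A functional on test functions dominated by `2 ∫ G |φ|` with `G` locally integrable is integration
against a locally integrable function. With `b` from `exists_weight`, the Cauchy–Schwarz inequality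
bounds `∫ G |φ| = ∫ b |φ| (G / b)` by the norm of `φ` in `L²((G / b) dx)` times `(∫ G b) ^ (1 / 2)`,
and the functional is then represented by an element of that `L²` space. -/
lemma exists_density {G : EuclideanSpace ℝ (Fin n) → ℝ≥0∞} (hG : Measurable G)
    (hGt : ∀ x, G x ≠ ⊤)
    (hGfin : ∀ m : ℕ, ∫⁻ x in closedBall 0 (m : ℝ), G x ≠ ⊤) (Λ : testFn n →ₗ[ℝ] ℝ)
    (hΛ : ∀ φ : testFn n, ‖Λ φ‖ₑ ≤ 2 * ∫⁻ x, G x * ‖φ.1 x‖ₑ) :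
    ∃ v : EuclideanSpace ℝ (Fin n) → ℝ, LocallyIntegrable v volume ∧
      ∀ φ : testFn n, Λ φ = ∫ x, v x * φ.1 x := by
  obtain ⟨b, hbm, hb0, hbt, hGb, hlow⟩ := exists_weight hG hGfin
  set ρ : EuclideanSpace ℝ (Fin n) → ℝ≥0∞ := fun x => G x / b x with hρ
  have hρm : Measurable ρ := hG.div hbm
  have hρt : ∀ x, ρ x < ⊤ := fun x => ENNReal.div_lt_top (hGt x) (hb0 x)
  have hρb : ∀ x, ρ x * b x = G x := fun x => ENNReal.div_mul_cancel (hb0 x) (hbt x)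
  set μ := (volume : Measure (EuclideanSpace ℝ (Fin n))).withDensity ρ with hμ
  have hμball : ∀ m : ℕ, μ (closedBall 0 (m : ℝ)) < ⊤ := by
    intro m
    obtain ⟨δ, hδ, hδb⟩ := hlow m
    rw [hμ, withDensity_apply _ measurableSet_closedBall]
    calc ∫⁻ x in closedBall 0 (m : ℝ), ρ x ≤ ∫⁻ x in closedBall 0 (m : ℝ), G x * δ⁻¹ := by
          refine setLIntegral_mono (hG.mul_const _) fun x hx => ?_
          simp only [hρ, div_eq_mul_inv]
          exact mul_le_mul_right (ENNReal.inv_le_inv.2 (hδb x hx)) _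
      _ = (∫⁻ x in closedBall 0 (m : ℝ), G x) * δ⁻¹ := lintegral_mul_const _ hG
      _ < ⊤ := ENNReal.mul_lt_top (hGfin m).lt_top (ENNReal.inv_lt_top.2 (pos_iff_ne_zero.2 hδ))
  have hlf : IsLocallyFiniteMeasure μ := ⟨fun x => by
    obtain ⟨m, hm⟩ := exists_nat_gt ‖x‖
    refine ⟨closedBall 0 m, closedBall_mem_nhds_of_mem ?_, hμball m⟩
    simpa using hm⟩
  have hmem : ∀ φ : testFn n, MemLp φ.1 2 μ := fun φ =>
    φ.2.1.continuous.memLp_of_hasCompactSupport φ.2.2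
  let ι : testFn n →ₗ[ℝ] Lp ℝ 2 μ :=
    { toFun := fun φ => (hmem φ).toLp
      map_add' := fun φ ψ => MemLp.toLp_add (hmem φ) (hmem ψ)
      map_smul' := fun c φ => MemLp.toLp_const_smul c (hmem φ) }
  set D : ℝ≥0∞ := 2 * (∫⁻ x, G x * b x) ^ (1 / (2 : ℝ)) with hD
  have hDt : D ≠ ⊤ := ENNReal.mul_ne_top (by simp) (ENNReal.rpow_ne_top_of_nonneg (by norm_num) hGb)
  have hbound : ∀ φ : testFn n, ‖Λ φ‖ₑ ≤ D * ‖ι φ‖ₑ := by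
    intro φ
    have h1 : ‖ι φ‖ₑ = (∫⁻ x, ‖φ.1 x‖ₑ ^ (2 : ℝ) ∂μ) ^ (1 / (2 : ℝ)) := by
      have : ‖ι φ‖ₑ = eLpNorm φ.1 2 μ := Lp.enorm_toLp (hmem φ)
      rw [this, eLpNorm_eq_lintegral_rpow_enorm_toReal (by simp) (by simp)]
      simp
    have hφm : Measurable fun x => ‖φ.1 x‖ₑ := φ.2.1.continuous.measurable.enorm
    have h2 : ∫⁻ x, G x * ‖φ.1 x‖ₑ = ∫⁻ x, (b * fun x => ‖φ.1 x‖ₑ) x ∂μ := by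
      rw [hμ, lintegral_withDensity_eq_lintegral_mul _ hρm (hbm.mul hφm)]
      refine lintegral_congr fun x => ?_
      simp only [Pi.mul_apply]
      rw [← hρb x, mul_assoc]
    have h3 : ∫⁻ x, G x * b x = ∫⁻ x, b x ^ (2 : ℝ) ∂μ := by
      rw [hμ, lintegral_withDensity_eq_lintegral_mul _ hρm (hbm.pow_const _)]
      refine lintegral_congr fun x => ?_
      simp only [Pi.mul_apply]
      rw [← hρb x, ENNReal.rpow_two, sq, mul_assoc]
    refine (hΛ φ).trans ?_
    rw [h1, hD, h2, h3, mul_assoc]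
    exact mul_le_mul_right (ENNReal.lintegral_mul_le_Lp_mul_Lq μ Real.HolderConjugate.two_two
      hbm.aemeasurable hφm.aemeasurable) _
  obtain ⟨u, hu⟩ := riesz_of_bound ι Λ D.toReal fun φ => by
    rw [← Real.norm_eq_abs, ← toReal_enorm, ← toReal_enorm, ← ENNReal.toReal_mul]
    exact ENNReal.toReal_mono (ENNReal.mul_ne_top hDt enorm_ne_top) (hbound φ)
  have huloc : LocallyIntegrable u μ := (Lp.memLp u).locallyIntegrable (by norm_num)
  obtain ⟨u', hu'⟩ : ∃ u' : EuclideanSpace ℝ (Fin n) → ℝ, u' = u := ⟨_, rfl⟩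
  rw [← hu'] at huloc
  refine ⟨fun x => (ρ x).toReal * u' x, ?_, fun φ => ?_⟩
  · refine locallyIntegrable_iff.2 fun K hK => ?_
    have h1 := huloc.integrableOn_isCompact hK
    rw [IntegrableOn, hμ, restrict_withDensity hK.measurableSet,
      integrable_withDensity_iff_integrable_smul' hρm (by simp [hρt])] at h1
    exact h1
  · rw [hu φ, L2.inner_def]
    have h1 : ∫ x, inner ℝ (u x) ((ι φ : Lp ℝ 2 μ) x) ∂μ = ∫ x, u' x * φ.1 x ∂μ := by
      refine integral_congr_ae ?_
      filter_upwards [(hmem φ).coeFn_toLp] with x hx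
      have : (ι φ : Lp ℝ 2 μ) x = φ.1 x := hx
      rw [this, hu']
      simp [mul_comm]
    rw [h1, hμ, integral_withDensity_eq_integral_toReal_smul hρm (by simp [hρt])]
    simp [mul_assoc]
end

/-! ### The pointwise inequality produces a weak gradient -/

section
open Filter Topology ContinuousLinearMap Convolution

variable {n : ℕ} {q : ℝ} {f g : EuclideanSpace ℝ (Fin n) → ℝ} {w : EuclideanSpace ℝ (Fin n) → ℝ}

/-- By Hölder's inequality and the local integrability of `w ^ (-1 / (q - 1))`. -/
lemma locallyIntegrable_of_wLqNorm (hq : 1 < q)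
    (hw_meas : Measurable w) (hw_pos : ∀ᵐ x ∂volume, 0 < w x) (hw : MemAq q w)
    (hf : AEMeasurable f volume) (hfq : wLqNorm q w univ f ≠ ⊤) : LocallyIntegrable f volume := by
  rw [wLqNorm_ne_top_iff hq] at hfq
  set W : EuclideanSpace ℝ (Fin n) → ℝ≥0∞ := fun x => ENNReal.ofReal (w x) with hW
  have hWm : Measurable W := hw_meas.ennreal_ofReal
  have hW0 : ∀ᵐ x, W x ≠ 0 := by
    filter_upwards [hw_pos] with x hx
    simpa [hW] using hx
  have hWt : ∀ᵐ x, W x ≠ ⊤ := by simp [hW]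
  have hq0 : 0 < q := by linarith
  have hq1 : 0 < q - 1 := by linarith
  refine locallyIntegrable_iff.2 fun K hK => ?_
  obtain ⟨r, hr⟩ := hK.isBounded.subset_closedBall (0 : EuclideanSpace ℝ (Fin n))
  set R := max r 1 with hR
  have hsub : K ⊆ closedBall (0 : EuclideanSpace ℝ (Fin n)) R :=
    hr.trans (closedBall_subset_closedBall (le_max_left _ _))
  refine IntegrableOn.mono_set ?_ hsub
  refine ⟨hf.aestronglyMeasurable.restrict, ?_⟩
  obtain ⟨-, -, hst⟩ := (hw.ballAq hq hw_pos).facts hq hWm hW0 hWt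
    (0 : EuclideanSpace ℝ (Fin n)) (r := R) (by positivity)
  have hpq : q.HolderConjugate (q / (q - 1)) := Real.HolderConjugate.conjExponent hq
  have h1 := ENNReal.lintegral_mul_le_Lp_mul_Lq (volume.restrict (closedBall 0 R)) hpq
    (f := fun x => ‖f x‖ₑ * W x ^ (1 / q)) (g := fun x => W x ^ (-(1 / q)))
    (hf.enorm.mul (hWm.pow_const _).aemeasurable).restrict (hWm.pow_const _).aemeasurable
  have h2 : ∫⁻ x in closedBall 0 R, ‖f x‖ₑ = ∫⁻ x in closedBall 0 R,
      ((fun x => ‖f x‖ₑ * W x ^ (1 / q)) * fun x => W x ^ (-(1 / q))) x := by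
    refine lintegral_congr_ae (ae_restrict_of_ae ?_)
    filter_upwards [hW0, hWt] with x h0 ht
    simp only [Pi.mul_apply]
    rw [mul_assoc, ← ENNReal.rpow_add _ _ h0 ht, add_neg_cancel, ENNReal.rpow_zero, mul_one]
  rw [HasFiniteIntegral, h2]
  refine lt_of_le_of_lt h1 (ENNReal.mul_lt_top ?_ ?_)
  · refine ENNReal.rpow_lt_top_of_nonneg (by positivity) (ne_top_of_le_ne_top hfq ?_)
    refine (setLIntegral_le_lintegral _ _).trans_eq (lintegral_congr fun x => ?_)
    rw [ENNReal.mul_rpow_of_nonneg _ _ hq0.le, ← ENNReal.rpow_mul, one_div_mul_cancel hq0.ne',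
      ENNReal.rpow_one]
  · refine ENNReal.rpow_lt_top_of_nonneg (by positivity) ?_
    convert hst using 3 with x
    rw [← ENNReal.rpow_mul]
    congr 1
    field_simp

/-- The pointwise inequality integrated against the translates of a test function bounds the
difference quotients of `y ↦ ∫ f(t + y) φ(t) dt`; its directional derivative at `0` is `-∫ f ∂ᵥφ`. -/
lemma test_bound (hf : LocallyIntegrable f volume) (hg : LocallyIntegrable g volume)
    {S : Set (EuclideanSpace ℝ (Fin n))} (hS : volume S = 0)
    (h : ∀ x ∉ S, ∀ y ∉ S, |f x - f y| ≤ dist x y * (g x + g y))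
    {φ : EuclideanSpace ℝ (Fin n) → ℝ} (hφ : ContDiff ℝ 1 φ) (hφc : HasCompactSupport φ)
    (v : EuclideanSpace ℝ (Fin n)) :
    |∫ t, f t * fderiv ℝ φ t v| ≤ 2 * ‖v‖ * ∫ t, g t * |φ t| := by
  -- with `φ` reflected, the translated integrals become the convolutions of `hasFDerivAt_conv`
  set ψ : EuclideanSpace ℝ (Fin n) → ℝ := fun s => φ (-s) with hψ
  have hψ1 : ContDiff ℝ 1 ψ := by fun_prop
  have hψc : HasCompactSupport ψ := hφc.comp_homeomorph (Homeomorph.neg _)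
  have hψcont : Continuous ψ := hψ1.continuous
  set F : EuclideanSpace ℝ (Fin n) → ℝ := fun y => ∫ t, f t * ψ (y - t) with hF
  set G : EuclideanSpace ℝ (Fin n) → ℝ := fun y => ∫ t, g t * |ψ (y - t)| with hG
  have hGc : Continuous G := by
    have h1 : HasCompactSupport fun s => |ψ s| := hψc.norm
    exact h1.continuous_convolution_right (lsmul ℝ ℝ) hg hψcont.abs
  have hint : ∀ {u : EuclideanSpace ℝ (Fin n) → ℝ}, LocallyIntegrable u volume → ∀ y,
      Integrable fun t => u t * ψ (y - t) := by
    intro u hu y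
    exact hψc.convolutionExists_right (lsmul ℝ ℝ) hu hψcont y
  have hint' : ∀ {u : EuclideanSpace ℝ (Fin n) → ℝ}, LocallyIntegrable u volume → ∀ y,
      Integrable fun t => u (t + y) * ψ (-t) := by
    intro u hu y
    have := (hint hu y).comp_add_right y
    simpa using this
  have htr : ∀ (u : EuclideanSpace ℝ (Fin n) → ℝ) (θ : ℝ → ℝ) y,
      ∫ t, u t * θ (ψ (y - t)) = ∫ t, u (t + y) * θ (ψ (-t)) := by
    intro u θ y
    rw [← integral_add_right_eq_self _ y]
    simp
  -- the pointwise inequality, integrated against a translate of the test function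
  have hdiff : ∀ y, |F y - F 0| ≤ ‖y‖ * (G y + G 0) := by
    intro y
    have hgi : ∀ y, Integrable fun t => g (t + y) * |ψ (-t)| := by
      intro y
      have h1 : HasCompactSupport fun s => |ψ s| := hψc.norm
      have h2 : Integrable fun t => g t * |ψ (y - t)| :=
        h1.convolutionExists_right (lsmul ℝ ℝ) hg hψcont.abs y
      have := h2.comp_add_right y
      simpa using this
    have e1 : F y - F 0 = ∫ t, (f (t + y) - f (t + 0)) * ψ (-t) := by
      rw [hF]
      simp only
      have h1 := htr f id y
      have h2 := htr f id 0
      simp only [id] at h1 h2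
      rw [h1, h2, ← integral_sub (hint' hf y) (hint' hf 0)]
      simp only [sub_mul]
    have e2 : ‖y‖ * (G y + G 0) = ∫ t, ‖y‖ * ((g (t + y) + g (t + 0)) * |ψ (-t)|) := by
      rw [hG]
      simp only
      rw [htr g abs y, htr g abs 0, integral_const_mul, ← integral_add (hgi y) (hgi 0)]
      simp only [add_mul]
    rw [e1, e2]
    refine (abs_integral_le_integral_abs).trans (integral_mono_ae ?_ ?_ ?_)
    · have := ((hint' hf y).sub (hint' hf 0)).abs
      refine this.congr (Eventually.of_forall fun t => ?_)
      simp [sub_mul]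
    · have := ((hgi y).add (hgi 0)).const_mul ‖y‖
      refine this.congr (Eventually.of_forall fun t => ?_)
      simp [add_mul]
    · have hS1 : ∀ᵐ t, t ∉ S := measure_eq_zero_iff_ae_notMem.1 hS
      have hS2 : ∀ᵐ t, t + y ∉ S :=
        (measurePreserving_add_right volume y).quasiMeasurePreserving.ae hS1
      filter_upwards [hS1, hS2] with t h1 h2
      rw [abs_mul, add_zero, ← mul_assoc]
      refine mul_le_mul_of_nonneg_right ?_ (abs_nonneg _)
      simpa [dist_eq_norm] using h _ h2 _ h1
  obtain ⟨L, hL, hLv⟩ := hasFDerivAt_conv hψ1 hψc hf (0 : EuclideanSpace ℝ (Fin n))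
  have hLφ : L v = - ∫ t, f t * fderiv ℝ φ t v := by
    rw [hLv, ← integral_neg]
    refine integral_congr_ae (Eventually.of_forall fun t => ?_)
    have h3 : HasFDerivAt φ (fderiv ℝ φ t) (-(0 - t)) := by
      simpa using (hφ.differentiable one_ne_zero t).hasFDerivAt
    have h5 : fderiv ℝ ψ (0 - t) = _ := (h3.comp (0 - t) (hasFDerivAt_id (0 - t)).neg).fderiv
    simp only
    rw [h5]
    simp
  have hG0 : G 0 = ∫ t, g t * |φ t| := by simp [hG, hψ]
  have hlim : Tendsto (fun s : ℝ => |s⁻¹ • (F (s • v) - F 0)|) (𝓝[≠] 0) (𝓝 |L v|) := by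
    have h1 : HasFDerivAt F L ((0 : ℝ) • v) := by rw [zero_smul]; exact hL
    have h2 : HasDerivAt (fun s : ℝ => F (s • v)) (L v) 0 := by
      have := h1.comp_hasDerivAt (0 : ℝ) ((hasDerivAt_id (0 : ℝ)).smul_const v)
      rw [one_smul] at this
      exact this
    have h3 := h2.tendsto_slope_zero.abs
    simpa using h3
  have hlim2 : Tendsto (fun s : ℝ => ‖v‖ * (G (s • v) + G 0)) (𝓝[≠] 0) (𝓝 (‖v‖ * (G 0 + G 0))) := by
    have : Continuous fun s : ℝ => ‖v‖ * (G (s • v) + G 0) := by fun_prop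
    have h1 := this.tendsto 0
    rw [zero_smul] at h1
    exact h1.mono_left nhdsWithin_le_nhds
  have hle : |L v| ≤ ‖v‖ * (G 0 + G 0) := by
    refine le_of_tendsto_of_tendsto hlim hlim2 ?_
    filter_upwards [self_mem_nhdsWithin] with s hs
    have hs' : s ≠ 0 := hs
    have h1 := hdiff (s • v)
    rw [norm_smul, Real.norm_eq_abs] at h1
    rw [smul_eq_mul, abs_mul, abs_inv, inv_mul_le_iff₀ (abs_pos.2 hs'), ← mul_assoc]
    exact h1
  rw [hLφ, abs_neg, hG0] at hle
  linarith

/-- Testing against translated mollifiers and letting the scale tend to zero. -/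
lemma abs_le_of_test_bound {v : EuclideanSpace ℝ (Fin n) → ℝ} (hv : LocallyIntegrable v volume)
    (hg : LocallyIntegrable g volume)
    (h : ∀ φ : testFn n, |∫ x, v x * φ.1 x| ≤ 2 * ∫ x, g x * |φ.1 x|) :
    ∀ᵐ x, |v x| ≤ 2 * g x := by
  filter_upwards [ae_moll_tendsto hv, ae_moll_tendsto hg] with x h1 h2
  refine le_of_tendsto_of_tendsto h1.abs (h2.const_mul 2) (Eventually.of_forall fun j => ?_)
  have hη : (fun t => (dyadicBump n (-(j : ℤ))).normed volume (x - t)) ∈ testFn n := by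
    refine ⟨?_, (dyadicBump n (-(j : ℤ))).hasCompactSupport_normed.comp_homeomorph
      (Homeomorph.subLeft x)⟩
    have : ContDiff ℝ (⊤ : ℕ∞) ((dyadicBump n (-(j : ℤ))).normed volume) :=
      (dyadicBump n _).contDiff_normed
    fun_prop
  have h3 := h ⟨_, hη⟩
  simp_rw [abs_of_nonneg ((dyadicBump n (-(j : ℤ))).nonneg_normed _)] at h3
  simpa [moll_eq] using h3

lemma exists_weak_partial (hf : LocallyIntegrable f volume) (hg : LocallyIntegrable g volume)
    (hg0 : ∀ x, 0 ≤ g x) {S : Set (EuclideanSpace ℝ (Fin n))} (hS : volume S = 0)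
    (h : ∀ x ∉ S, ∀ y ∉ S, |f x - f y| ≤ dist x y * (g x + g y)) (k : Fin n) :
    ∃ v : EuclideanSpace ℝ (Fin n) → ℝ, LocallyIntegrable v volume ∧ (∀ᵐ x, |v x| ≤ 2 * g x) ∧
      ∀ φ : testFn n, ∫ x, f x * fderiv ℝ φ.1 x (EuclideanSpace.single k 1) =
        - ∫ x, v x * φ.1 x := by
  have hC1 : ∀ φ : testFn n, ContDiff ℝ 1 φ.1 := fun φ => φ.2.1.of_le (by exact_mod_cast le_top)
  have hint : ∀ φ : testFn n,
      Integrable fun x => f x * fderiv ℝ φ.1 x (EuclideanSpace.single k 1) := fun φ =>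
    hf.integrable_smul_right_of_hasCompactSupport
      (((hC1 φ).continuous_fderiv one_ne_zero).clm_apply continuous_const)
      (φ.2.2.fderiv_apply (𝕜 := ℝ) _)
  let Λ : testFn n →ₗ[ℝ] ℝ :=
    { toFun := fun φ => - ∫ x, f x * fderiv ℝ φ.1 x (EuclideanSpace.single k 1)
      map_add' := fun φ ψ => by
        rw [← neg_add, ← integral_add (hint φ) (hint ψ)]
        congr 1
        refine integral_congr_ae (Eventually.of_forall fun x => ?_)
        have : fderiv ℝ (φ + ψ : testFn n).1 x = fderiv ℝ φ.1 x + fderiv ℝ ψ.1 x :=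
          fderiv_add ((hC1 φ).differentiable one_ne_zero x) ((hC1 ψ).differentiable one_ne_zero x)
        simp only [this, _root_.add_apply, mul_add]
      map_smul' := fun c φ => by
        rw [RingHom.id_apply, smul_eq_mul, mul_neg, ← integral_const_mul]
        congr 1
        refine integral_congr_ae (Eventually.of_forall fun x => ?_)
        have : fderiv ℝ (c • φ : testFn n).1 x = c • fderiv ℝ φ.1 x :=
          fderiv_const_smul ((hC1 φ).differentiable one_ne_zero x) c
        simp only [this, _root_.smul_apply, smul_eq_mul]
        ring }
  have hΛ : ∀ φ : testFn n, |Λ φ| ≤ 2 * ∫ x, g x * |φ.1 x| := fun φ => by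
    have := test_bound hf hg hS h (hC1 φ) φ.2.2 (EuclideanSpace.single k 1)
    have e : |Λ φ| = |∫ x, f x * fderiv ℝ φ.1 x (EuclideanSpace.single k 1)| := abs_neg _
    rw [e]
    simpa using this
  have hgm : AEMeasurable g volume := hg.aestronglyMeasurable.aemeasurable
  set g' := hgm.mk with hg'
  have hgg' : g =ᵐ[volume] g' := hgm.ae_eq_mk
  have hg'loc : LocallyIntegrable g' volume := hg.congr hgg'
  obtain ⟨v, hv, hΛv⟩ := exists_density (G := fun x => ‖g' x‖ₑ) hgm.measurable_mk.enorm
    (fun x => enorm_ne_top)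
    (fun m => ((hg'loc.integrableOn_isCompact (isCompact_closedBall 0 (m : ℝ))).2).ne) Λ
    fun φ => by
      have h1 : ∫⁻ x, ‖g' x‖ₑ * ‖φ.1 x‖ₑ = ∫⁻ x, ENNReal.ofReal (g x * |φ.1 x|) := by
        refine lintegral_congr_ae ?_
        filter_upwards [hgg'] with x hx
        rw [← hx, ENNReal.ofReal_mul (hg0 x), Real.enorm_of_nonneg (hg0 x),
          Real.enorm_eq_ofReal_abs (φ.1 x)]
      have h2 : Integrable fun x => g x * |φ.1 x| :=
        hg.integrable_smul_right_of_hasCompactSupport φ.2.1.continuous.abs φ.2.2.norm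
      rw [h1, ← ofReal_integral_eq_lintegral_ofReal h2 (Eventually.of_forall fun x =>
        mul_nonneg (hg0 x) (abs_nonneg _)), Real.enorm_eq_ofReal_abs]
      refine (ENNReal.ofReal_le_ofReal (hΛ φ)).trans_eq ?_
      rw [ENNReal.ofReal_mul (by norm_num)]
      simp
  refine ⟨v, hv, abs_le_of_test_bound hv hg fun φ => ?_, fun φ => ?_⟩
  · rw [← hΛv]; exact hΛ φ
  · rw [← hΛv]; exact (neg_neg _).symm

/-- A function in `L^q(w)` that satisfies the pointwise inequality with `g ∈ L^q(w)` has a weak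
gradient in `L^q(w)`. -/
theorem backward (hq : 1 < q)
    (hw_meas : Measurable w) (hw_pos : ∀ᵐ x ∂volume, 0 < w x) (hw : MemAq q w)
    (hfm : AEMeasurable f volume) (hfq : wLqNorm q w univ f ≠ ⊤)
    (hg0 : ∀ x, 0 ≤ g x) (hgm : AEMeasurable g volume) (hgq : wLqNorm q w univ g ≠ ⊤)
    {S : Set (EuclideanSpace ℝ (Fin n))} (hS : volume S = 0)
    (h : ∀ x ∉ S, ∀ y ∉ S, |f x - f y| ≤ dist x y * (g x + g y)) :
    ∃ gf, IsWeakGrad f gf ∧ wLqNorm q w univ (fun x => ‖gf x‖) ≠ ⊤ := by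
  have hf := locallyIntegrable_of_wLqNorm hq hw_meas hw_pos hw hfm hfq
  have hg := locallyIntegrable_of_wLqNorm hq hw_meas hw_pos hw hgm hgq
  choose v hv hvg hvφ using exists_weak_partial hf hg hg0 hS h
  refine ⟨fun x => WithLp.toLp 2 fun k => v k x, ⟨hf, ?_, fun φ hφ hφc k => hvφ k ⟨φ, hφ, hφc⟩⟩, ?_⟩
  · have h1 : LocallyIntegrable (fun x => ∑ k, v k x • EuclideanSpace.single k (1 : ℝ)) volume := by
      refine locallyIntegrable_finsetSum _ fun k _ => ?_
      refine locallyIntegrable_iff.2 fun K hK => ?_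
      exact ((hv k).integrableOn_isCompact hK).smul_const _
    convert h1 using 2 with x
    ext j
    simp [Finset.sum_apply, Pi.single_apply]
  · have hle : ∀ᵐ x, ‖(WithLp.toLp 2 fun k => v k x : EuclideanSpace ℝ (Fin n))‖ ≤
        2 * n * g x := by
      filter_upwards [ae_all_iff.2 hvg] with x hx
      have e : (WithLp.toLp 2 fun k => v k x : EuclideanSpace ℝ (Fin n)) =
          ∑ k, v k x • EuclideanSpace.single k (1 : ℝ) := by
        ext j
        simp [Finset.sum_apply, Pi.single_apply]
      rw [e]
      refine (norm_sum_le _ _).trans ?_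
      calc ∑ k, ‖v k x • EuclideanSpace.single k (1 : ℝ)‖ ≤ ∑ _k : Fin n, 2 * g x := by
            refine Finset.sum_le_sum fun k _ => ?_
            rw [norm_smul]
            simpa using hx k
        _ = 2 * n * g x := by simp; ring
    rw [wLqNorm_ne_top_iff hq] at hgq ⊢
    refine ne_top_of_le_ne_top (b := ENNReal.ofReal (2 * n) ^ q *
      ∫⁻ x, ‖g x‖ₑ ^ q * ENNReal.ofReal (w x)) ?_ ?_
    · exact ENNReal.mul_ne_top (ENNReal.rpow_ne_top_of_nonneg (by linarith) ofReal_ne_top) hgq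
    · have hm : AEMeasurable (fun x => ‖g x‖ₑ ^ q * ENNReal.ofReal (w x)) volume :=
        (hgm.enorm.pow_const q).mul hw_meas.ennreal_ofReal.aemeasurable
      rw [← lintegral_const_mul'' _ hm]
      refine lintegral_mono_ae ?_
      filter_upwards [hle] with x hx
      rw [← mul_assoc, ← ENNReal.mul_rpow_of_nonneg _ _ (by linarith : 0 ≤ q)]
      gcongr
      rw [enorm_norm, ← ofReal_norm, Real.enorm_of_nonneg (hg0 x),
        ← ENNReal.ofReal_mul (by positivity)]
      exact ENNReal.ofReal_le_ofReal hx
end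

/-- for `1 < q < ∞` and a weight `w ∈ A_q(ℝⁿ)`, a function `f`
belongs to the weighted Sobolev space `W^{1,q}(ℝⁿ,w)` iff `f ∈ L^q(ℝⁿ,w)` and
there is a nonnegative `g ∈ L^q(ℝⁿ,w)` with
`|f(x) − f(y)| ≤ |x−y|(g(x)+g(y))` for a.e. pair `x, y ∈ ℝⁿ`. -/
theorem pointwise_characterization_weighted_sobolev {n : ℕ} (q : ℝ) (hq : 1 < q)
    (w : EuclideanSpace ℝ (Fin n) → ℝ)
    (hw_meas : Measurable w) (hw_pos : ∀ᵐ x ∂volume, 0 < w x)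
    (hw : MemAq q w)
    (f : EuclideanSpace ℝ (Fin n) → ℝ) :
    ((AEMeasurable f volume ∧ wLqNorm q w univ f ≠ ⊤) ∧
      ∃ gf, IsWeakGrad f gf ∧ wLqNorm q w univ (fun x => ‖gf x‖) ≠ ⊤) ↔
    ((AEMeasurable f volume ∧ wLqNorm q w univ f ≠ ⊤) ∧
      ∃ g : EuclideanSpace ℝ (Fin n) → ℝ, (∀ x, 0 ≤ g x) ∧
        AEMeasurable g volume ∧ wLqNorm q w univ g ≠ ⊤ ∧
        ∃ S : Set (EuclideanSpace ℝ (Fin n)), volume S = 0 ∧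
          ∀ x ∉ S, ∀ y ∉ S, |f x - f y| ≤ dist x y * (g x + g y)) := by
  constructor
  · rintro ⟨hf, gf, hgf, hgfq⟩
    exact ⟨hf, forward hq hw_meas hw_pos hw hgf hgfq⟩
  · rintro ⟨hf, g, hg0, hgm, hgq, S, hS, h⟩
    exact ⟨hf, backward hq hw_meas hw_pos hw hf.1 hf.2 hg0 hgm hgq hS h⟩
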